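/- arXiv:2505.19654 — 2 statements merged into one kernel-verified Lean document; each statement's English description precedes it below -/
import Mathlib

section
/- Let d ≥ 3 and r ≥ 1 be integers and let k₁, …, k_r be positive integers with 1/k₁ + ⋯ + 1/k_r < 1. There is a constant c > 0 depending only on d, r, k₁, …, k_r such that the following holds for all sufficiently large primes p. Let ω ∈ F_{p^d} be such that 1, ω, …, ω^{d−1} form an F_p-basis of F_{p^d}, let 0 < σ < 11/16 be real, set Q = {x₀ + x₁ω + ⋯ + x_{d−2}ω^{d−2} : x_i integers in [1, p^σ]}, Q₀ = {y₀ + y₁ω : y₀, y₁ integers in [1, p^{9/20 − σ/5}]}, and let I_s = [1, p^{1/k_s}] for s = 1, …, r, viewed as subsets of F_{p^d}. Then E(I₁, I₂, …, I_r, Q, Q₀) ≤ exp(c · log p / log log p) · |Q| · |Q₀| · ∏_{s=1}^{r} |I_s|^{(19 − 4σ)/10}. -/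
open Finset

/-!
Expanding the energy over the multiplicative characters of `F` and applying Hölder's inequality with
weights `1 - ∑ 1 / k_s` and `1 / k_s` reduces the bound to the energy `E₀` of `(Q, Q₀)` and to the
energies `E_s` of `(I_s, …, I_s, Q, Q₀)` with `k_s` copies of `I_s`.

Elements of `Q` and `Q₀` are values at `ω` of polynomials `q` of degree `d - 2` and `l` of degree
`1` over `ZMod p`, so by linear independence a coincidence `c q l = c' q' l'` in `F` is an identity
of polynomials. For `E₀`, the product `q l` determines `l` up to a scalar through one of its roots,
and the divisor bound leaves few scalars. For `E_s`, the scalars are products of `k_s` elements of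
`I_s`, each with few factorizations because these products are smaller than `p`; what remains is to
count `q l` and `q' l'` up to units. Since `l'` is irreducible, either `l' ~ l` and `q' ~ q`, which
is controlled by the ratios of two coefficients, or `l'` divides `q`, in which case `q` is
determined by its nonconstant coefficients.
-/

open scoped Classical in
/-- The energy of a map `f` on a finite set `X` counts the pairs of points of `X` with the same
image. The multiplicative energy of `A₁, …, Aₙ` is the energy of the product map on
`A₁ × ⋯ × Aₙ`; replacing `f` by `Associates.mk ∘ f` counts the coincidences up to units. -/
noncomputable def energy {α β : Type*} (X : Finset α) (f : α → β) : ℕ :=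
  #{t ∈ X ×ˢ X | f t.1 = f t.2}

section Energy

variable {α β γ : Type*} {X : Finset α} {f : α → β}

lemma energy_eq_sum_card [DecidableEq β] (X : Finset α) (f : α → β) :
    energy X f = ∑ x ∈ X, #{y ∈ X | f y = f x} := by
  simp only [energy, card_filter, sum_product, eq_comm]
  congr!

lemma energy_le_card_mul [DecidableEq β] {τ : ℕ} (h : ∀ b, #{x ∈ X | f x = b} ≤ τ) :
    energy X f ≤ #X * τ := by
  rw [energy_eq_sum_card]
  exact sum_le_card_nsmul X _ τ fun x _ ↦ h (f x)

lemma energy_comp_of_injOn {g : β → γ} (hg : (f '' X).InjOn g) :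
    energy X (g ∘ f) = energy X f := by
  classical
  simp only [energy_eq_sum_card]
  exact sum_congr rfl fun x hx ↦ congrArg card <| filter_congr fun y hy ↦
    hg.eq_iff ⟨y, hy, rfl⟩ ⟨x, hx, rfl⟩

lemma card_le_energy {P : γ × γ → Prop} (g : α → γ)
    (h : ∀ t, P t → ∃ x ∈ X, ∃ y ∈ X, g x = t.1 ∧ g y = t.2 ∧ f x = f y) :
    Nat.card {t // P t} ≤ energy X f := by
  classical
  calc
    Nat.card {t // P t} ≤ #({t ∈ X ×ˢ X | f t.1 = f t.2}.image (Prod.map g g)) := by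
      refine (Nat.card_mono (finite_toSet _) fun t (ht : P t) ↦ ?_).trans_eq
        (Set.ncard_coe_finset _)
      obtain ⟨x, hx, y, hy, hxt, hyt, hxy⟩ := h t ht
      exact mem_image.2 ⟨(x, y), by simp [hx, hy, hxy], Prod.ext hxt hyt⟩
    _ ≤ energy X f := by
      unfold energy
      convert card_image_le

lemma card_le_energy_prod_mul {ι R : Type*} [CommMonoid R] [Fintype ι] [DecidableEq ι]
    {I : ι → Finset α} {g : α → R} {X : Finset β} {q : β → R} {Y : Finset γ} {l : γ → R}
    {P : ((ι → R) × R × R) × ((ι → R) × R × R) → Prop}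
    (h : ∀ t, P t → ((∀ s, t.1.1 s ∈ g '' I s) ∧ t.1.2.1 ∈ q '' X ∧ t.1.2.2 ∈ l '' Y) ∧
      ((∀ s, t.2.1 s ∈ g '' I s) ∧ t.2.2.1 ∈ q '' X ∧ t.2.2.2 ∈ l '' Y) ∧
      (∏ s, t.1.1 s) * t.1.2.1 * t.1.2.2 = (∏ s, t.2.1 s) * t.2.2.1 * t.2.2.2) :
    Nat.card {t // P t} ≤ energy (Fintype.piFinset I ×ˢ (X ×ˢ Y))
      fun x ↦ (∏ s, g (x.1 s)) * (q x.2.1 * l x.2.2) := by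
  have exists_preimage (u : (ι → R) × R × R)
      (hu : (∀ s, u.1 s ∈ g '' I s) ∧ u.2.1 ∈ q '' X ∧ u.2.2 ∈ l '' Y) :
      ∃ x ∈ Fintype.piFinset I ×ˢ (X ×ˢ Y), (fun s ↦ g (x.1 s), q x.2.1, l x.2.2) = u := by
    obtain ⟨hI, ⟨b, hb, hbu⟩, c, hc, hcu⟩ := hu
    choose a ha hau using hI
    exact ⟨(a, b, c), by simpa using ⟨ha, hb, hc⟩, by simp [hau, hbu, hcu]⟩
  refine card_le_energy (fun x ↦ (fun s ↦ g (x.1 s), q x.2.1, l x.2.2)) fun t ht ↦ ?_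
  obtain ⟨h₁, h₂, heq⟩ := h t ht
  obtain ⟨x, hx, hxt⟩ := exists_preimage t.1 h₁
  obtain ⟨y, hy, hyt⟩ := exists_preimage t.2 h₂
  refine ⟨x, hx, y, hy, hxt, hyt, ?_⟩
  simpa only [← hxt, ← hyt, mul_assoc] using heq

lemma energy_mul_le {M : Type*} [CommMonoidWithZero M] [IsCancelMulZero M] [DecidableEq M]
    {X : Finset α} {g : α → M} {Y : Finset β} {h : β → M} {τ : ℕ} (hg : ∀ x ∈ X, IsUnit (g x))
    (hfiber : ∀ c, #{x ∈ X | g x = c} ≤ τ) (hh : ∀ y ∈ Y, h y ≠ 0) :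
    (energy (X ×ˢ Y) fun t ↦ g t.1 * h t.2) ≤ #X * τ * energy Y (Associates.mk ∘ h) := by
  classical
  have fiber_le {t₀ : α × β} (ht₀ : t₀ ∈ X ×ˢ Y) :
      #{t ∈ X ×ˢ Y | g t.1 * h t.2 = g t₀.1 * h t₀.2} ≤
        τ * #{y ∈ Y | Associates.mk (h y) = Associates.mk (h t₀.2)} := by
    rw [mem_product] at ht₀
    refine card_le_mul_card_image_of_maps_to (f := Prod.snd) (fun t ht ↦ ?_) τ fun y hy ↦ ?_
    · simp only [mem_filter, mem_product] at ht
      refine mem_filter.2 ⟨ht.1.2, Associates.mk_eq_mk_iff_associated.2 ?_⟩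
      calc
        Associated (h t.2) (g t.1 * h t.2) := (associated_unit_mul_left _ _ (hg _ ht.1.1)).symm
        _ = g t₀.1 * h t₀.2 := ht.2
        Associated _ (h t₀.2) := associated_unit_mul_left _ _ (hg _ ht₀.1)
    · rcases eq_empty_or_nonempty
        ({t ∈ {t ∈ X ×ˢ Y | g t.1 * h t.2 = g t₀.1 * h t₀.2} | t.2 = y} : Finset _) with
        he | ⟨s, hs⟩
      · simp [he]
      simp only [mem_filter, mem_product] at hs
      refine (card_le_card_of_injOn Prod.fst (fun t ht ↦ ?_) fun t ht t' ht' htt' ↦ ?_).trans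
        (hfiber (g s.1))
      · simp only [coe_filter, mem_filter, mem_product, Set.mem_ofPred_eq] at ht ⊢
        refine ⟨ht.1.1.1, mul_right_cancel₀ (hh y (mem_filter.1 hy).1) ?_⟩
        rw [← ht.2, ht.1.2, ← hs.1.2, hs.2, ht.2]
      · simp only [coe_filter, Set.mem_ofPred_eq] at ht ht'
        exact Prod.ext htt' (ht.2.trans ht'.2.symm)
  calc
    _ = ∑ t₀ ∈ X ×ˢ Y, #{t ∈ X ×ˢ Y | g t.1 * h t.2 = g t₀.1 * h t₀.2} := energy_eq_sum_card _ _
    _ ≤ ∑ t₀ ∈ X ×ˢ Y, τ * #{y ∈ Y | Associates.mk (h y) = Associates.mk (h t₀.2)} :=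
      sum_le_sum fun t₀ ht₀ ↦ fiber_le ht₀
    _ = #X * τ * energy Y (Associates.mk ∘ h) := by
      simp only [sum_product, ← mul_sum, sum_const, smul_eq_mul, energy_eq_sum_card,
        Function.comp_apply]
      ring

end Energy

section Holder

lemma sum_rpow_mul_prod_rpow_le {α ι : Type*} [Fintype α] [Fintype ι] {g : α → ℝ}
    {f : ι → α → ℝ} (hg : ∀ a, 0 ≤ g a) (hf : ∀ i a, 0 ≤ f i a) {q : ℝ} {p : ι → ℝ}
    (hpq : q + ∑ i, p i = 1) (hq : 0 ≤ q) (hp : ∀ i, 0 ≤ p i) :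
    ∑ a, g a ^ q * ∏ i, f i a ^ p i ≤ (∑ a, g a) ^ q * ∏ i, (∑ a, f i a) ^ p i := by
  lift g to α → NNReal using hg
  lift f to ι → α → NNReal using hf
  let _ : MeasurableSpace α := ⊤
  have holder := ENNReal.lintegral_mul_prod_norm_pow_le (μ := MeasureTheory.Measure.count) univ
    (g := fun a ↦ g a) (f := fun i a ↦ f i a) (by fun_prop) (by fun_prop) q hpq hq fun i _ ↦ hp i
  simp only [MeasureTheory.lintegral_count, tsum_fintype] at holder
  have coe_rpow (x : NNReal) {t : ℝ} (ht : 0 ≤ t) := (ENNReal.coe_rpow_of_nonneg x ht).symm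
  simp only [coe_rpow, hq, hp, ← ENNReal.ofNNReal_finsetSum, ← ENNReal.ofNNReal_finsetProd,
    ← ENNReal.coe_mul, ENNReal.coe_le_coe] at holder
  beta_reduce
  exact_mod_cast holder

variable {R : Type*} [CommRing R]

lemma sum_mulChar_apply_eq_zero [Finite R] [Fintype (MulChar R ℂ)] {a : R} (ha : a ≠ 1) :
    ∑ χ : MulChar R ℂ, χ a = 0 := by
  obtain ⟨χ, hχ⟩ := MulChar.exists_apply_ne_one_of_hasEnoughRootsOfUnity R ℂ ha
  refine eq_zero_of_mul_eq_self_left hχ ?_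
  simp only [mul_sum, ← MulChar.mul_apply]
  exact Fintype.sum_bijective _ (Group.mulLeft_bijective χ) _ _ fun χ' ↦ rfl

lemma sum_mulChar_apply_mul_star [Finite R] [DecidableEq R] [Fintype (MulChar R ℂ)]
    {a b : R} (hb : IsUnit b) :
    ∑ χ : MulChar R ℂ, χ a * star (χ b) =
      if a = b then (Fintype.card (MulChar R ℂ) : ℂ) else 0 := by
  have hχ (χ : MulChar R ℂ) : χ a * star (χ b) = χ (a * Ring.inverse b) := by
    rw [MulChar.star_apply', MulChar.inv_apply, map_mul]
  simp only [hχ]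
  split_ifs with hab
  · simp [hab, Ring.mul_inverse_cancel _ hb]
  · refine sum_mulChar_apply_eq_zero fun h ↦ hab ?_
    rw [← mul_one a, ← Ring.inverse_mul_cancel _ hb, ← mul_assoc, h, one_mul]

lemma energy_mul_card_mulChar [Finite R] [Fintype (MulChar R ℂ)] {α : Type*} {X : Finset α}
    {f : α → R} (hf : ∀ x ∈ X, IsUnit (f x)) :
    (energy X f * Fintype.card (MulChar R ℂ) : ℝ) =
      ∑ χ : MulChar R ℂ, ‖∑ x ∈ X, χ (f x)‖ ^ 2 := by
  classical
  have norm_sq (χ : MulChar R ℂ) : (‖∑ x ∈ X, χ (f x)‖ ^ 2 : ℂ) =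
      ∑ x ∈ X, ∑ y ∈ X, χ (f y) * star (χ (f x)) := by
    rw [← Complex.mul_conj', map_sum, sum_mul_sum, sum_comm]
    rfl
  suffices (∑ χ : MulChar R ℂ, ‖∑ x ∈ X, χ (f x)‖ ^ 2 : ℂ) =
      energy X f * Fintype.card (MulChar R ℂ) by exact_mod_cast this.symm
  calc
    _ = ∑ x ∈ X, ∑ y ∈ X, ∑ χ : MulChar R ℂ, χ (f y) * star (χ (f x)) := by
      simp only [norm_sq]
      rw [sum_comm]
      exact sum_congr rfl fun x _ ↦ sum_comm
    _ = ∑ x ∈ X, ∑ y ∈ X, if f y = f x then (Fintype.card (MulChar R ℂ) : ℂ) else 0 :=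
      sum_congr rfl fun x hx ↦ sum_congr rfl fun y _ ↦ sum_mulChar_apply_mul_star (hf x hx)
    _ = energy X f * Fintype.card (MulChar R ℂ) := by
      simp only [energy_eq_sum_card, ← sum_filter, sum_const, nsmul_eq_mul, Nat.cast_sum, sum_mul]

variable {α β : Type*} {g : α → R} {Y : Finset β} {h : β → R}

lemma norm_sum_mulChar_prod_mul_sq {ι : Type*} [Fintype ι] [DecidableEq ι] (χ : MulChar R ℂ)
    (A : ι → Finset α) :
    ‖∑ x ∈ Fintype.piFinset A ×ˢ Y, χ ((∏ s, g (x.1 s)) * h x.2)‖ ^ 2 =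
      ‖∑ y ∈ Y, χ (h y)‖ ^ 2 * ∏ s, ‖∑ a ∈ A s, χ (g a)‖ ^ 2 := by
  have factor : ∑ x ∈ Fintype.piFinset A ×ˢ Y, χ ((∏ s, g (x.1 s)) * h x.2) =
      (∏ s, ∑ a ∈ A s, χ (g a)) * ∑ y ∈ Y, χ (h y) := by
    rw [prod_univ_sum, sum_mul_sum, sum_product]
    simp only [map_mul, map_prod]
  rw [factor, norm_mul, norm_prod, mul_pow, prod_pow, mul_comm]

lemma energy_prod_mul_mul_card_mulChar [Finite R] [Fintype (MulChar R ℂ)] {ι : Type*} [Fintype ι]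
    [DecidableEq ι] {A : ι → Finset α} (hg : ∀ s, ∀ a ∈ A s, IsUnit (g a))
    (hh : ∀ y ∈ Y, IsUnit (h y)) :
    ((energy (Fintype.piFinset A ×ˢ Y) fun x ↦ (∏ s, g (x.1 s)) * h x.2) *
        Fintype.card (MulChar R ℂ) : ℝ) =
      ∑ χ : MulChar R ℂ, ‖∑ y ∈ Y, χ (h y)‖ ^ 2 * ∏ s, ‖∑ a ∈ A s, χ (g a)‖ ^ 2 := by
  rw [energy_mul_card_mulChar]
  · exact sum_congr rfl fun χ _ ↦ norm_sum_mulChar_prod_mul_sq χ A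
  · intro x hx
    rw [mem_product, Fintype.mem_piFinset] at hx
    exact (IsUnit.prod_univ_iff.2 fun s ↦ hg s _ (hx.1 s)).mul (hh _ hx.2)

lemma energy_prod_mul_le [Finite R] {ι : Type*} [Fintype ι] [DecidableEq ι] {A : ι → Finset α}
    (hg : ∀ s, ∀ a ∈ A s, IsUnit (g a)) (hh : ∀ y ∈ Y, IsUnit (h y)) {k : ι → ℕ}
    (hk : ∀ s, k s ≠ 0) (hksum : ∑ s, (1 : ℝ) / k s ≤ 1) :
    (energy (Fintype.piFinset A ×ˢ Y) fun x ↦ (∏ s, g (x.1 s)) * h x.2 : ℝ) ≤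
      (energy Y h : ℝ) ^ (1 - ∑ s, (1 : ℝ) / k s) *
        ∏ s, (energy (Fintype.piFinset (fun _ : Fin (k s) ↦ A s) ×ˢ Y)
          fun x ↦ (∏ j, g (x.1 j)) * h x.2 : ℝ) ^ ((1 : ℝ) / k s) := by
  have := Fintype.ofFinite (MulChar R ℂ)
  have card_pos : (0 : ℝ) < Fintype.card (MulChar R ℂ) := by exact_mod_cast Fintype.card_pos
  set W : MulChar R ℂ → ℝ := fun χ ↦ ‖∑ y ∈ Y, χ (h y)‖ ^ 2 / Fintype.card (MulChar R ℂ)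
  set u : ι → MulChar R ℂ → ℝ := fun s χ ↦ ‖∑ a ∈ A s, χ (g a)‖ ^ 2
  have W_nonneg (χ) : 0 ≤ W χ := by positivity
  have u_nonneg (s χ) : 0 ≤ u s χ := by positivity
  have energy_A := eq_div_of_mul_eq card_pos.ne' (energy_prod_mul_mul_card_mulChar hg hh)
  have energy_Y := eq_div_of_mul_eq card_pos.ne' (energy_mul_card_mulChar hh)
  have energy_pow (s) := eq_div_of_mul_eq card_pos.ne'
    (energy_prod_mul_mul_card_mulChar (ι := Fin (k s)) (fun _ ↦ hg s) hh)
  simp only [sum_div, ← div_mul_eq_mul_div, prod_const, card_univ, Fintype.card_fin]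
    at energy_A energy_Y energy_pow
  rw [energy_A, energy_Y]
  simp only [energy_pow]
  refine le_of_eq_of_le (sum_congr rfl fun χ _ ↦ ?_) (sum_rpow_mul_prod_rpow_le W_nonneg
    (fun s χ ↦ mul_nonneg (W_nonneg χ) (pow_nonneg (u_nonneg s χ) (k s))) (sub_add_cancel 1 _)
    (sub_nonneg.2 hksum) fun s ↦ by positivity)
  have rpow_split (s) : (W χ * u s χ ^ k s) ^ ((1 : ℝ) / k s) = W χ ^ ((1 : ℝ) / k s) * u s χ := by
    rw [Real.mul_rpow (W_nonneg χ) (pow_nonneg (u_nonneg s χ) _), one_div,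
      Real.pow_rpow_inv_natCast (u_nonneg s χ) (hk s)]
  simp only [rpow_split, prod_mul_distrib]
  rw [← mul_assoc, ← Real.rpow_sum_of_nonneg (W_nonneg χ) fun s _ ↦ by positivity,
    ← Real.rpow_add_of_nonneg (W_nonneg χ) (sub_nonneg.2 hksum)
      (sum_nonneg fun s _ ↦ by positivity), sub_add_cancel, Real.rpow_one]

end Holder

section DivisorBound

lemma factorization_add_one_le {n q : ℕ} (hn : n ≠ 0) (hq : q ∈ n.primeFactors) {y : ℝ}
    (hy : 1 < y) :
    (n.factorization q + 1 : ℝ) ≤ (if q ≤ ⌊y⌋₊ then (Nat.log 2 n + 1 : ℝ) else 1) *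
      ((q : ℝ) ^ n.factorization q) ^ (Real.log 2 / Real.log y) := by
  have hq2 : 2 ≤ q := (Nat.prime_of_mem_primeFactors hq).two_le
  have hδ : 0 < Real.log 2 / Real.log y := div_pos (Real.log_pos one_lt_two) (Real.log_pos hy)
  set δ := Real.log 2 / Real.log y
  set e := n.factorization q
  split_ifs with hqy
  · have he : e ≤ Nat.log 2 n := Nat.le_log_of_pow_le one_lt_two <|
      (Nat.pow_le_pow_left hq2 e).trans (Nat.ordProj_le q hn)
    have one_le : 1 ≤ ((q : ℝ) ^ e) ^ δ :=
      Real.one_le_rpow (one_le_pow₀ (by exact_mod_cast one_le_two.trans hq2)) hδ.le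
    calc
      (e + 1 : ℝ) ≤ Nat.log 2 n + 1 := by gcongr
      _ ≤ (Nat.log 2 n + 1) * ((q : ℝ) ^ e) ^ δ := le_mul_of_one_le_right (by positivity) one_le
  · have y_lt : y < q := (Nat.floor_lt (by positivity)).1 (not_le.1 hqy)
    have rpow_δ : y ^ δ = 2 := by
      rw [Real.rpow_def_of_pos (by positivity), mul_div_cancel₀ _ (Real.log_pos hy).ne',
        Real.exp_log two_pos]
    calc
      (e + 1 : ℝ) ≤ 2 ^ e := by exact_mod_cast Nat.lt_two_pow_self
      _ = (y ^ e) ^ δ := by rw [← rpow_δ, Real.rpow_pow_comm (by positivity)]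
      _ ≤ 1 * ((q : ℝ) ^ e) ^ δ := by rw [one_mul]; gcongr

lemma card_divisors_le {n : ℕ} (hn : n ≠ 0) {y : ℝ} (hy : 1 < y) :
    (#n.divisors : ℝ) ≤
      (Nat.log 2 n + 1 : ℝ) ^ ⌊y⌋₊ * (n : ℝ) ^ (Real.log 2 / Real.log y) := by
  have card_small : #{q ∈ n.primeFactors | q ≤ ⌊y⌋₊} ≤ ⌊y⌋₊ := by
    have : {q ∈ n.primeFactors | q ≤ ⌊y⌋₊} ⊆ Icc 1 ⌊y⌋₊ := fun q hq ↦ by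
      rw [mem_filter] at hq
      exact mem_Icc.2 ⟨(Nat.prime_of_mem_primeFactors hq.1).one_le, hq.2⟩
    simpa using card_le_card this
  have prod_pow : ∏ q ∈ n.primeFactors, (q : ℝ) ^ n.factorization q = n := by
    exact_mod_cast Nat.prod_factorization_pow_eq_self hn
  calc
    (#n.divisors : ℝ) = ∏ q ∈ n.primeFactors, (n.factorization q + 1 : ℝ) := by
      exact_mod_cast Nat.card_divisors hn
    _ ≤ ∏ q ∈ n.primeFactors, (if q ≤ ⌊y⌋₊ then (Nat.log 2 n + 1 : ℝ) else 1) *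
          ((q : ℝ) ^ n.factorization q) ^ (Real.log 2 / Real.log y) :=
      prod_le_prod (fun q _ ↦ by positivity) fun q hq ↦ factorization_add_one_le hn hq hy
    _ = (Nat.log 2 n + 1 : ℝ) ^ #{q ∈ n.primeFactors | q ≤ ⌊y⌋₊} *
          (n : ℝ) ^ (Real.log 2 / Real.log y) := by
      rw [prod_mul_distrib, ← prod_filter, prod_const,
        Real.finsetProd_rpow _ _ fun q _ ↦ by positivity, prod_pow]
    _ ≤ _ := by gcongr; linarith [(Nat.cast_nonneg (Nat.log 2 n) : (0 : ℝ) ≤ _)]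

lemma log_sq_le_sqrt {x : ℝ} (hx : 1 ≤ x) : Real.log x ^ 2 ≤ 16 * √x := by
  have log_le : Real.log x ≤ 4 * x ^ (1 / 4 : ℝ) := by
    linarith [Real.log_le_rpow_div (zero_le_one.trans hx) (ε := 1 / 4) (by norm_num)]
  calc
    Real.log x ^ 2 ≤ (4 * x ^ (1 / 4 : ℝ)) ^ 2 := by
      gcongr
      exact Real.log_nonneg hx
    _ = 16 * √x := by
      rw [mul_pow, ← Real.rpow_mul_natCast (by linarith), Real.sqrt_eq_rpow]
      norm_num

-- With the cutoff `y = √L` the small primes cost only `exp (O(√L log L))`, while `log y` keeps the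
-- order of `log L`.
lemma card_divisors_le_exp {L : ℝ} (hL : 4 ≤ L) {n : ℕ} (hn : n ≠ 0)
    (hnL : Real.log n ≤ 2 * L) : (#n.divisors : ℝ) ≤ Real.exp (40 * L / Real.log L) := by
  have logL_pos : 0 < Real.log L := Real.log_pos (by linarith)
  have one_lt_sqrt : 1 < √L := Real.lt_sqrt_of_sq_lt (by linarith)
  have n_pos : (0 : ℝ) < n := by positivity
  have two_log : 0.69 < Real.log 2 ∧ Real.log 2 < 0.7 :=
    ⟨by linarith [Real.log_two_gt_d9], by linarith [Real.log_two_lt_d9]⟩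
  have log_add_one_le : (Nat.log 2 n + 1 : ℝ) ≤ L ^ 2 := by
    have : Nat.log 2 n * Real.log 2 ≤ Real.log n := by
      rw [← Real.log_pow]
      exact Real.log_le_log (by positivity) (by exact_mod_cast Nat.pow_log_le_self 2 hn)
    nlinarith
  have small_primes : (Nat.log 2 n + 1 : ℝ) ^ ⌊√L⌋₊ ≤ Real.exp (2 * Real.log L * √L) := by
    calc
      _ ≤ (L ^ 2) ^ ⌊√L⌋₊ := by gcongr
      _ = Real.exp (2 * Real.log L * ⌊√L⌋₊) := by
        rw [← Real.rpow_natCast, Real.rpow_def_of_pos (by positivity), Real.log_pow, Nat.cast_two]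
      _ ≤ _ := by gcongr; exact Nat.floor_le (by positivity)
  have large_primes : (n : ℝ) ^ (Real.log 2 / Real.log √L) ≤
      Real.exp (2 * L * (Real.log 2 / Real.log √L)) := by
    rw [Real.rpow_def_of_pos n_pos]
    gcongr
    exact (div_pos (by linarith) (Real.log_pos one_lt_sqrt)).le
  refine (card_divisors_le hn one_lt_sqrt).trans
    ((mul_le_mul small_primes large_primes (by positivity) (by positivity)).trans ?_)
  rw [← Real.exp_add, Real.log_sqrt (by linarith), Real.exp_le_exp, le_div_iff₀ logL_pos]
  calc
    (2 * Real.log L * √L + 2 * L * (Real.log 2 / (Real.log L / 2))) * Real.log L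
        = 2 * (Real.log L ^ 2 * √L) + 4 * L * Real.log 2 := by field_simp; ring
    _ ≤ 2 * (16 * √L * √L) + 4 * L * Real.log 2 := by
      gcongr
      exact log_sq_le_sqrt (by linarith)
    _ ≤ 40 * L := by
      rw [mul_assoc 16, Real.mul_self_sqrt (by linarith)]
      nlinarith

lemma card_divisors_le_natFloor_exp {p : ℕ} (hp : 4 ≤ Real.log p) {n : ℕ} (hn : n ≠ 0)
    (hnp : n < p ^ 2) :
    #n.divisors ≤ ⌊Real.exp (40 * Real.log p / Real.log (Real.log p))⌋₊ := by
  refine Nat.le_floor (card_divisors_le_exp hp hn ?_)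
  have log_le := Real.log_le_log (by positivity) (Nat.cast_le (α := ℝ).2 hnp.le)
  rwa [Nat.cast_pow, Real.log_pow, Nat.cast_two] at log_le

lemma four_le_log {p : ℕ} (hp : 81 < p) : 4 ≤ Real.log p := by
  rw [Real.le_log_iff_exp_le (by positivity)]
  calc
    Real.exp 4 = Real.exp 1 ^ 4 := by rw [← Real.exp_nat_mul]; norm_num
    _ ≤ 3 ^ 4 := by gcongr; exact Real.exp_one_lt_three.le
    _ ≤ p := by norm_num; exact_mod_cast hp.le

end DivisorBound

section ResidueInterval

/-- The image in `ZMod p` of the integers in `[1, N]`, encoded through the residues in `[0, p)`: it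
has `N` elements, none of them zero, when `N < p`. -/
def residueInterval (p N : ℕ) [NeZero p] : Finset (ZMod p) := {a | a.val ∈ Icc 1 N}

variable {p N M : ℕ}

lemma mem_residueInterval [NeZero p] {a : ZMod p} :
    a ∈ residueInterval p N ↔ 1 ≤ a.val ∧ a.val ≤ N := by
  simp only [residueInterval, mem_filter_univ, mem_Icc]

lemma zero_notMem_residueInterval [NeZero p] : (0 : ZMod p) ∉ residueInterval p N := by
  simp [mem_residueInterval]

lemma residueInterval_eq_image [NeZero p] (hN : N < p) :
    residueInterval p N = (Icc 1 N).image (Nat.cast : ℕ → ZMod p) := by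
  ext a
  simp only [mem_residueInterval, mem_image, mem_Icc]
  refine ⟨fun ha ↦ ⟨a.val, ha, ZMod.natCast_zmod_val a⟩, ?_⟩
  rintro ⟨n, hn, rfl⟩
  rwa [ZMod.val_natCast_of_lt (hn.2.trans_lt hN)]

lemma card_residueInterval [NeZero p] (hN : N < p) : #(residueInterval p N) = N := by
  rw [residueInterval_eq_image hN, card_image_of_injOn, Nat.card_Icc, Nat.add_sub_cancel]
  intro a ha b hb hab
  rw [coe_Icc, Set.mem_Icc] at ha hb
  rw [← ZMod.val_natCast_of_lt (ha.2.trans_lt hN), hab, ZMod.val_natCast_of_lt (hb.2.trans_lt hN)]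

variable [Fact p.Prime] {T : ℕ}

lemma one_le_of_card_divisors_le (hT : ∀ n ≠ 0, n < p ^ 2 → #n.divisors ≤ T) : 1 ≤ T := by
  simpa only [Nat.divisors_one, card_singleton] using
    hT 1 one_ne_zero (Nat.one_lt_pow two_ne_zero (Fact.out : p.Prime).one_lt)

-- The integer product of two residues in `[1, N] × [1, M]` lies in one of `N * M / p + 1` intervals
-- of length `p`, in each of which `c` has a single representative.
lemma card_mul_eq_le_of_card_divisors_le (hT : ∀ n ≠ 0, n < p ^ 2 → #n.divisors ≤ T) (c : ZMod p) :
    #{x ∈ residueInterval p N ×ˢ residueInterval p M | x.1 * x.2 = c} ≤ T * (N * M / p + 1) := by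
  rw [← card_range (N * M / p + 1)]
  refine card_le_mul_card_image_of_maps_to (f := fun x ↦ x.1.val * x.2.val / p)
    (fun x hx ↦ ?_) T fun j _ ↦ ?_
  · simp only [mem_filter, mem_product, mem_residueInterval] at hx
    rw [mem_range, Nat.lt_succ_iff]
    exact Nat.div_le_div_right (Nat.mul_le_mul hx.1.1.2 hx.1.2.2)
  · set S : Finset (ZMod p × ZMod p) := {x ∈ {x ∈ residueInterval p N ×ˢ residueInterval p M |
      x.1 * x.2 = c} | x.1.val * x.2.val / p = j} with hS
    have spec {x} (hx : x ∈ S) : 0 < x.1.val ∧ 0 < x.2.val ∧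
        x.1.val * x.2.val = p * j + c.val := by
      simp only [hS, mem_filter, mem_product, mem_residueInterval] at hx
      refine ⟨hx.1.1.1.1, hx.1.1.2.1, ?_⟩
      rw [← hx.2, ← hx.1.2, ZMod.val_mul, Nat.div_add_mod]
    rcases S.eq_empty_or_nonempty with hS | ⟨x₀, hx₀⟩
    · simp [hS]
    have n_ne : p * j + c.val ≠ 0 := by
      rw [← (spec hx₀).2.2]
      exact (Nat.mul_pos (spec hx₀).1 (spec hx₀).2.1).ne'
    have n_lt : p * j + c.val < p ^ 2 := by
      rw [← (spec hx₀).2.2, sq]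
      exact Nat.mul_lt_mul'' (ZMod.val_lt _) (ZMod.val_lt _)
    refine (card_le_card_of_injOn (fun x ↦ x.1.val) (fun x hx ↦ ?_) fun x hx y hy hxy ↦ ?_).trans
      (hT _ n_ne n_lt)
    · exact Nat.mem_divisors.2 ⟨Dvd.intro _ (spec hx).2.2, n_ne⟩
    · change x.1.val = y.1.val at hxy
      have snd_eq : x.2.val = y.2.val := by
        refine Nat.eq_of_mul_eq_mul_left (spec hx).1 ?_
        rw [(spec hx).2.2, ← (spec hy).2.2, ← hxy]
      exact Prod.ext (ZMod.val_injective p hxy) (ZMod.val_injective p snd_eq)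

lemma card_prod_eq_le_of_card_divisors_le {ι : Type*} [Fintype ι] [DecidableEq ι]
    (hT : ∀ n ≠ 0, n < p → #n.divisors ≤ T) (hN : N ^ Fintype.card ι < p) (c : ZMod p) :
    #{x ∈ Fintype.piFinset fun _ : ι ↦ residueInterval p N | ∏ i, x i = c} ≤
      T ^ Fintype.card ι := by
  set S : Finset (ι → ZMod p) := {x ∈ Fintype.piFinset fun _ ↦ residueInterval p N | ∏ i, x i = c}
  have spec {x} (hx : x ∈ S) : (∀ i, 0 < (x i).val) ∧ ∏ i, (x i).val = c.val := by
    simp only [S, mem_filter, Fintype.mem_piFinset, mem_residueInterval] at hx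
    have prod_lt : ∏ i, (x i).val < p :=
      (prod_le_pow_card _ _ N fun i _ ↦ (hx.1 i).2).trans_lt hN
    refine ⟨fun i ↦ (hx.1 i).1, ?_⟩
    rw [← hx.2, ← ZMod.val_natCast_of_lt prod_lt, Nat.cast_prod]
    simp only [ZMod.natCast_zmod_val]
  rcases S.eq_empty_or_nonempty with hS | ⟨x₀, hx₀⟩
  · simp [hS]
  have c_ne : c.val ≠ 0 := by
    rw [← (spec hx₀).2]
    exact (prod_pos fun i _ ↦ (spec hx₀).1 i).ne'
  calc
    #S ≤ #(Fintype.piFinset fun _ : ι ↦ c.val.divisors) := by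
      refine card_le_card_of_injOn (fun x i ↦ (x i).val) (fun x hx ↦ ?_) fun x _ y _ hxy ↦ ?_
      · refine mem_coe.2 <| Fintype.mem_piFinset.2 fun i ↦ Nat.mem_divisors.2 ⟨?_, c_ne⟩
        rw [← (spec hx).2]
        exact dvd_prod_of_mem _ (mem_univ i)
      · exact funext fun i ↦ ZMod.val_injective p (congrFun hxy i)
    _ = #c.val.divisors ^ Fintype.card ι := by
      simp only [Fintype.card_piFinset, prod_const, card_univ]
    _ ≤ T ^ Fintype.card ι := Nat.pow_le_pow_left (hT _ c_ne (ZMod.val_lt c)) _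

end ResidueInterval

section CoeffBox

open Polynomial

variable {K : Type*} [Field K]

lemma eq_of_associated_of_coeff_eq {P P' : K[X]} (h : Associated P P') {i : ℕ}
    (hi : P.coeff i = P'.coeff i) (h₀ : P.coeff i ≠ 0) : P = P' := by
  obtain ⟨u, rfl⟩ := h
  obtain ⟨a, -, ha⟩ := Polynomial.isUnit_iff.1 u.isUnit
  rw [← ha, coeff_mul_C, left_eq_mul₀ h₀] at hi
  rw [← ha, hi, C_1, mul_one]

lemma coeff_zero_eq_of_isRoot {l : K[X]} {ρ : K} (hl : l.degree ≤ 1) (h : l.IsRoot ρ) :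
    l.coeff 0 = -(l.coeff 1 * ρ) := by
  rw [IsRoot, eq_X_add_C_of_degree_le_one hl] at h
  simp only [eval_add, eval_mul, eval_C, eval_X] at h
  exact eq_neg_of_add_eq_zero_right h

variable [DecidableEq K] {A B : Finset K} {D m : ℕ}

/-- The polynomials of degree `< D` all of whose coefficients of index `< D` lie in `A`. The sets
`Q` and `Q₀` of the theorem are the images of such boxes, with `D = d - 1` and `D = 2`, under
evaluation at `ω`. -/
noncomputable def coeffBox (A : Finset K) (D : ℕ) : Finset K[X] :=
  (Fintype.piFinset fun _ : Fin D ↦ A).map ⟨ofFn D, injective_ofFn D⟩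

lemma mem_coeffBox {P : K[X]} : P ∈ coeffBox A D ↔ P.degree < D ∧ ∀ i < D, P.coeff i ∈ A := by
  simp only [coeffBox, mem_map, Fintype.mem_piFinset, Function.Embedding.coeFn_mk]
  constructor
  · rintro ⟨v, hv, rfl⟩
    exact ⟨ofFn_degree_lt v, fun i hi ↦ by rw [ofFn_coeff_eq_val_of_lt v hi]; exact hv _⟩
  · rintro ⟨hdeg, hcoeff⟩
    refine ⟨fun i ↦ P.coeff i, fun i ↦ hcoeff i i.2, ext fun i ↦ ?_⟩
    rcases lt_or_ge i D with hi | hi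
    · rw [ofFn_coeff_eq_val_of_lt _ hi]
    · rw [ofFn_coeff_eq_zero_of_ge _ hi, (degree_lt_iff_coeff_zero P D).1 hdeg i hi]

lemma card_coeffBox : #(coeffBox A D) = #A ^ D := by
  simp only [coeffBox, card_map, Fintype.card_piFinset, prod_const, card_univ, Fintype.card_fin]

lemma divX_mem_coeffBox {P : K[X]} (hP : P ∈ coeffBox A (D + 1)) : P.divX ∈ coeffBox A D := by
  rw [mem_coeffBox, degree_lt_iff_coeff_zero] at hP ⊢
  simp only [coeff_divX]
  exact ⟨fun i hi ↦ hP.1 (i + 1) (Nat.succ_le_succ hi),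
    fun i hi ↦ hP.2 (i + 1) (Nat.succ_lt_succ hi)⟩

lemma coeff_ne_zero_of_mem_coeffBox (hA : 0 ∉ A) {P : K[X]} (hP : P ∈ coeffBox A D) {i : ℕ}
    (hi : i < D) : P.coeff i ≠ 0 :=
  ne_of_mem_of_not_mem ((mem_coeffBox.1 hP).2 i hi) hA

lemma ne_zero_of_mem_coeffBox (hA : 0 ∉ A) {P : K[X]} (hP : P ∈ coeffBox A (D + 1)) : P ≠ 0 := by
  rintro rfl
  exact coeff_ne_zero_of_mem_coeffBox hA hP D.succ_pos (coeff_zero 0)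

lemma degree_eq_one_of_mem_coeffBox (hA : 0 ∉ A) {P : K[X]} (hP : P ∈ coeffBox A 2) :
    P.degree = 1 :=
  degree_eq_of_le_of_coeff_ne_zero
    (degree_le_of_natDegree_le (Nat.lt_succ_iff.1
      ((natDegree_lt_iff_degree_lt (ne_zero_of_mem_coeffBox hA hP)).2 (mem_coeffBox.1 hP).1)))
    (coeff_ne_zero_of_mem_coeffBox hA hP one_lt_two)

-- If `P' = u P` then `P₀ P'₁ = P₁ P'₀`, while `P` and `P'₀` determine `P'`.
lemma energy_coeffBox_le (hA : 0 ∉ A) :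
    energy (coeffBox A (m + 2)) Associates.mk ≤
      #A ^ m * energy (A ×ˢ A) fun x ↦ x.1 * x.2 := by
  classical
  rw [← card_coeffBox, mul_comm, energy, energy, ← card_product]
  refine card_le_card_of_injOn
    (fun t ↦ (((t.1.coeff 0, t.2.coeff 1), (t.1.coeff 1, t.2.coeff 0)), t.1.divX.divX))
    (fun t ht ↦ ?_) fun t ht t' ht' htt' ↦ ?_
  · simp only [mem_coe, mem_filter, mem_product, Associates.mk_eq_mk_iff_associated] at ht ⊢
    obtain ⟨⟨hP, hP'⟩, u, hu⟩ := ht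
    obtain ⟨a, -, ha⟩ := Polynomial.isUnit_iff.1 u.isUnit
    have coeff_mem {P : K[X]} (hP : P ∈ coeffBox A (m + 2)) : P.coeff 0 ∈ A ∧ P.coeff 1 ∈ A :=
      ⟨(mem_coeffBox.1 hP).2 0 (by omega), (mem_coeffBox.1 hP).2 1 (by omega)⟩
    refine ⟨⟨⟨⟨(coeff_mem hP).1, (coeff_mem hP').2⟩, (coeff_mem hP).2, (coeff_mem hP').1⟩, ?_⟩,
      divX_mem_coeffBox (divX_mem_coeffBox hP)⟩
    rw [← hu, ← ha, coeff_mul_C, coeff_mul_C]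
    ring
  · simp only [mem_coe, mem_filter, mem_product, Associates.mk_eq_mk_iff_associated] at ht ht'
    simp only [Prod.mk.injEq] at htt'
    obtain ⟨⟨⟨h₀, -⟩, h₁, h₀'⟩, hdivX⟩ := htt'
    have fst_eq : t.1 = t'.1 := by
      rw [← divX_mul_X_add t.1, ← divX_mul_X_add t'.1, ← divX_mul_X_add t.1.divX,
        ← divX_mul_X_add t'.1.divX, hdivX, coeff_divX, coeff_divX, h₀, h₁]
    have snd_associated : Associated t.2 t'.2 := (ht.2.symm.trans (by rw [fst_eq])).trans ht'.2
    exact Prod.ext fst_eq <| eq_of_associated_of_coeff_eq snd_associated h₀'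
      (coeff_ne_zero_of_mem_coeffBox hA ht.1.2 (by omega))

lemma card_filter_dvd_coeffBox_le {l : K[X]} (hl : ¬IsUnit l) [DecidablePred (l ∣ ·)] :
    #{q ∈ coeffBox A (D + 1) | l ∣ q} ≤ #A ^ D := by
  rw [← card_coeffBox]
  refine card_le_card_of_injOn divX (fun q hq ↦ ?_) fun q hq q' hq' hqq' ↦ ?_
  · exact divX_mem_coeffBox (mem_filter.1 hq).1
  · by_contra hne
    have sub_eq : q - q' = C (q.coeff 0 - q'.coeff 0) := by
      rw [← divX_mul_X_add q, ← divX_mul_X_add q', hqq', C_sub]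
      simp
    have hunit : IsUnit (q - q') := by
      rw [sub_eq, isUnit_C, isUnit_iff_ne_zero]
      rintro h
      rw [h, C_0, sub_eq_zero] at sub_eq
      exact hne sub_eq
    exact hl (isUnit_of_dvd_unit (dvd_sub (mem_filter.1 hq).2 (mem_filter.1 hq').2) hunit)

lemma card_filter_associated_mul_le (hA : 0 ∉ A) {l : K[X]} (hl : l ≠ 0) (z : K[X])
    [DecidablePred fun q : K[X] ↦ Associated (q * l) z] :
    #{q ∈ coeffBox A (D + 1) | Associated (q * l) z} ≤ #A := by
  refine card_le_card_of_injOn (coeff · 0) (fun q hq ↦ ?_) fun q hq q' hq' hqq' ↦ ?_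
  · exact (mem_coeffBox.1 (mem_filter.1 hq).1).2 0 D.succ_pos
  · rw [mem_coe, mem_filter] at hq hq'
    exact eq_of_associated_of_coeff_eq
      ((hq.2.trans hq'.2.symm).of_mul_right (Associated.refl l) hl) hqq'
      (coeff_ne_zero_of_mem_coeffBox hA hq.1 D.succ_pos)

-- Unless `l` and `l'` are associated, `q' l' ~ q l` forces `l'` to divide `q`.
lemma card_filter_associated_mul_mul_le (hA : 0 ∉ A) {q l l' : K[X]} (hl : Irreducible l)
    (hl' : Irreducible l') [DecidableRel (Associated (M := K[X]))] [Decidable (l' ∣ q)] :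
    #{q' ∈ coeffBox A (D + 1) | Associated (q' * l') (q * l)} ≤
      (if Associated l' l then #{q' ∈ coeffBox A (D + 1) | Associated q' q} else 0) +
        if l' ∣ q then #A else 0 := by
  by_cases hll : Associated l' l
  · rw [if_pos hll]
    refine Nat.le_add_right_of_le (card_le_card fun q' hq' ↦ ?_)
    rw [mem_filter] at hq' ⊢
    exact ⟨hq'.1, hq'.2.of_mul_right hll hl'.ne_zero⟩
  by_cases hlq : l' ∣ q
  · rw [if_pos hlq]
    exact Nat.le_add_left_of_le (card_filter_associated_mul_le hA hl'.ne_zero _)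
  · rw [filter_false_of_mem, card_empty]
    · exact Nat.zero_le _
    · intro q' _ h
      rcases hl'.prime.dvd_or_dvd ((dvd_mul_left l' q').trans h.dvd) with hdvd | hdvd
      · exact hlq hdvd
      · exact hll (hl'.associated_of_dvd hl hdvd)

lemma energy_coeffBox_mul_le (hA : 0 ∉ A) {Λ : Finset K[X]} (hΛ : ∀ l ∈ Λ, Irreducible l) :
    (energy (coeffBox A (D + 1) ×ˢ Λ) fun x ↦ Associates.mk (x.1 * x.2)) ≤
      energy (coeffBox A (D + 1)) Associates.mk * energy Λ Associates.mk +
        #Λ ^ 2 * #(coeffBox A (D + 1)) := by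
  classical
  set Q := coeffBox A (D + 1) with hQ
  have sum_dvd_le : ∑ q ∈ Q, ∑ _l ∈ Λ, ∑ l' ∈ Λ, (if l' ∣ q then #A else 0) ≤ #Λ ^ 2 * #Q := by
    simp only [sum_const, smul_eq_mul, ← mul_sum]
    rw [sum_comm, sq, mul_assoc]
    gcongr
    refine sum_le_card_nsmul _ _ _ fun l' hl' ↦ ?_
    rw [← sum_filter, sum_const, smul_eq_mul, hQ, card_coeffBox, pow_succ]
    gcongr
    exact card_filter_dvd_coeffBox_le (hΛ l' hl').not_isUnit
  calc
    _ = ∑ q ∈ Q, ∑ l ∈ Λ, ∑ l' ∈ Λ, #{q' ∈ Q | Associated (q' * l') (q * l)} := by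
      simp only [energy_eq_sum_card, Associates.mk_eq_mk_iff_associated, sum_product]
      exact sum_congr rfl fun q _ ↦ sum_congr rfl fun l _ ↦ by
        simp only [card_filter, sum_product_right]
    _ ≤ ∑ q ∈ Q, ∑ l ∈ Λ, ∑ l' ∈ Λ,
          ((if Associated l' l then #{q' ∈ Q | Associated q' q} else 0) +
            if l' ∣ q then #A else 0) := by
      gcongr with q _ l hl l' hl'
      exact card_filter_associated_mul_mul_le hA (hΛ l hl) (hΛ l' hl')
    _ ≤ energy Q Associates.mk * energy Λ Associates.mk + #Λ ^ 2 * #Q := by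
      simp only [sum_add_distrib]
      refine add_le_add (le_of_eq ?_) sum_dvd_le
      simp only [energy_eq_sum_card, Associates.mk_eq_mk_iff_associated, sum_mul_sum, ← sum_filter,
        sum_const, smul_eq_mul]
      exact sum_congr rfl fun q _ ↦ sum_congr rfl fun l _ ↦ mul_comm _ _

-- Once the root `ρ` of `l` is fixed, `z₀ = q₀ l₀ = -q₀ l₁ ρ` determines `q₀ l₁`.
lemma card_filter_mul_eq_and_isRoot_le (hB : 0 ∉ B) {τ : ℕ}
    (hτ : ∀ c, #{x ∈ A ×ˢ B | x.1 * x.2 = c} ≤ τ) (z : K[X]) (ρ : K) [DecidablePred (IsRoot · ρ)] :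
    #{x ∈ coeffBox A (D + 1) ×ˢ coeffBox B 2 | x.1 * x.2 = z ∧ x.2.IsRoot ρ} ≤ τ := by
  have spec {x : K[X] × K[X]} (hx : x ∈ ({x ∈ coeffBox A (D + 1) ×ˢ coeffBox B 2 |
      x.1 * x.2 = z ∧ x.2.IsRoot ρ} : Finset _)) :
      x.1 ∈ coeffBox A (D + 1) ∧ x.2 ∈ coeffBox B 2 ∧ x.1 * x.2 = z ∧
        x.2.coeff 0 = -(x.2.coeff 1 * ρ) := by
    simp only [mem_filter, mem_product, and_assoc] at hx
    exact ⟨hx.1, hx.2.1, hx.2.2.1,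
      coeff_zero_eq_of_isRoot (degree_eq_one_of_mem_coeffBox hB hx.2.1).le hx.2.2.2⟩
  refine (card_le_card_of_injOn (fun x ↦ (x.1.coeff 0, x.2.coeff 1)) (fun x hx ↦ ?_)
    fun x hx y hy hxy ↦ ?_).trans (hτ (-z.coeff 0 / ρ))
  · obtain ⟨hq, hl, hz, hl₀⟩ := spec hx
    have ρ_ne : ρ ≠ 0 := by
      rintro rfl
      exact coeff_ne_zero_of_mem_coeffBox hB hl two_pos (by rw [hl₀, mul_zero, neg_zero])
    simp only [mem_coe, mem_filter, mem_product]
    refine ⟨⟨(mem_coeffBox.1 hq).2 0 D.succ_pos, (mem_coeffBox.1 hl).2 1 one_lt_two⟩, ?_⟩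
    rw [eq_div_iff ρ_ne, ← hz, mul_coeff_zero, hl₀]
    ring
  · obtain ⟨-, hl, hz, hl₀⟩ := spec hx
    obtain ⟨-, hl', hz', hl₀'⟩ := spec hy
    have coeff_one : x.2.coeff 1 = y.2.coeff 1 := congrArg Prod.snd hxy
    have snd_eq : x.2 = y.2 := by
      rw [eq_X_add_C_of_degree_le_one (degree_eq_one_of_mem_coeffBox hB hl).le,
        eq_X_add_C_of_degree_le_one (degree_eq_one_of_mem_coeffBox hB hl').le, hl₀, hl₀', coeff_one]
    refine Prod.ext (mul_right_cancel₀ (ne_zero_of_mem_coeffBox hB hl) ?_) snd_eq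
    rw [hz, ← hz', snd_eq]

lemma card_filter_mul_eq_le (hA : 0 ∉ A) (hB : 0 ∉ B) {τ : ℕ}
    (hτ : ∀ c, #{x ∈ A ×ˢ B | x.1 * x.2 = c} ≤ τ) (z : K[X]) :
    #{x ∈ coeffBox A (D + 1) ×ˢ coeffBox B 2 | x.1 * x.2 = z} ≤ (D + 1) * τ := by
  classical
  rcases ({x ∈ coeffBox A (D + 1) ×ˢ coeffBox B 2 | x.1 * x.2 = z} :
    Finset _).eq_empty_or_nonempty with hempty | ⟨x₀, hx₀⟩
  · simp [hempty]
  simp only [mem_filter, mem_product] at hx₀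
  obtain ⟨⟨hq₀, hl₀⟩, hz⟩ := hx₀
  have z_ne : z ≠ 0 :=
    hz ▸ mul_ne_zero (ne_zero_of_mem_coeffBox hA hq₀) (ne_zero_of_mem_coeffBox hB hl₀)
  have card_roots_le : #z.roots.toFinset ≤ D + 1 := by
    refine (z.roots.toFinset_card_le.trans (card_roots' z)).trans (hz ▸ natDegree_mul_le.trans ?_)
    rw [natDegree_eq_of_degree_eq_some (degree_eq_one_of_mem_coeffBox hB hl₀)]
    exact Nat.add_le_add_right (Nat.lt_succ_iff.1 ((natDegree_lt_iff_degree_lt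
      (ne_zero_of_mem_coeffBox hA hq₀)).2 (mem_coeffBox.1 hq₀).1)) 1
  have subset_biUnion : {x ∈ coeffBox A (D + 1) ×ˢ coeffBox B 2 | x.1 * x.2 = z} ⊆
      z.roots.toFinset.biUnion fun ρ ↦
        {x ∈ coeffBox A (D + 1) ×ˢ coeffBox B 2 | x.1 * x.2 = z ∧ x.2.IsRoot ρ} := by
    intro x hx
    rw [mem_filter, mem_product] at hx
    obtain ⟨ρ, hρ⟩ := exists_root_of_degree_eq_one (degree_eq_one_of_mem_coeffBox hB hx.1.2)
    simp only [mem_biUnion, Multiset.mem_toFinset, mem_roots z_ne, mem_filter, mem_product]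
    exact ⟨ρ, hx.2 ▸ root_mul_left_of_isRoot x.1 hρ, hx.1, hx.2, hρ⟩
  exact (card_le_card subset_biUnion).trans <| (card_biUnion_le_card_mul _ _ τ fun ρ _ ↦
    card_filter_mul_eq_and_isRoot_le hB hτ z ρ).trans (Nat.mul_le_mul_right τ card_roots_le)

lemma energy_associates_coeffBox_mul_le (hA : 0 ∉ A) (hB : 0 ∉ B) {τA τB : ℕ}
    (hτA : ∀ c, #{x ∈ A ×ˢ A | x.1 * x.2 = c} ≤ τA)
    (hτB : ∀ c, #{x ∈ B ×ˢ B | x.1 * x.2 = c} ≤ τB) :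
    (energy (coeffBox A (m + 2) ×ˢ coeffBox B 2) fun x ↦ Associates.mk (x.1 * x.2)) ≤
      #A ^ (m + 2) * #B ^ 2 * (τA * τB + #B ^ 2) := by
  have energy_A : energy (coeffBox A (m + 2)) Associates.mk ≤ #A ^ (m + 2) * τA :=
    calc
      _ ≤ #A ^ m * (#(A ×ˢ A) * τA) :=
        (energy_coeffBox_le hA).trans (Nat.mul_le_mul_left _ (energy_le_card_mul hτA))
      _ = #A ^ (m + 2) * τA := by rw [card_product]; ring
  have energy_B : energy (coeffBox B 2) Associates.mk ≤ #B ^ 2 * τB :=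
    calc
      _ ≤ #B ^ 0 * (#(B ×ˢ B) * τB) :=
        (energy_coeffBox_le hB).trans (Nat.mul_le_mul_left _ (energy_le_card_mul hτB))
      _ = #B ^ 2 * τB := by rw [card_product]; ring
  calc
    _ ≤ energy (coeffBox A (m + 2)) Associates.mk * energy (coeffBox B 2) Associates.mk +
          #(coeffBox B 2) ^ 2 * #(coeffBox A (m + 2)) :=
      energy_coeffBox_mul_le hA fun l hl ↦
        irreducible_of_degree_eq_one (degree_eq_one_of_mem_coeffBox hB hl)
    _ ≤ #A ^ (m + 2) * τA * (#B ^ 2 * τB) + (#B ^ 2) ^ 2 * #A ^ (m + 2) := by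
      rw [card_coeffBox, card_coeffBox]
      gcongr
    _ = #A ^ (m + 2) * #B ^ 2 * (τA * τB + #B ^ 2) := by ring

end CoeffBox

section Evaluation

open Polynomial

variable {K F : Type*} [Field K] [CommRing F] [Algebra K F] {ω : F} {d : ℕ}

lemma injOn_aeval_of_linearIndependent (hω : LinearIndependent K fun i : Fin d ↦ ω ^ (i : ℕ)) :
    Set.InjOn (aeval ω) {P : K[X] | P.degree < d} := by
  intro P hP P' hP' h
  have hdeg : P - P' ∈ degreeLT K d := sub_mem (mem_degreeLT.2 hP) (mem_degreeLT.2 hP')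
  have hsum : ∑ i : Fin d, (P - P').coeff i • ω ^ (i : ℕ) = 0 := by
    rw [sum_fin (fun i a ↦ a • ω ^ i) (fun _ ↦ zero_smul K _) (mem_degreeLT.1 hdeg)]
    have aeval_sub : aeval ω (P - P') = 0 := by rw [map_sub, h, sub_self]
    simpa only [aeval_def, eval₂_eq_sum, Algebra.smul_def] using aeval_sub
  rw [← sub_eq_zero]
  ext i
  rcases lt_or_ge i d with hi | hi
  · exact Fintype.linearIndependent_iff.1 hω _ hsum ⟨i, hi⟩
  · exact (degree_lt_iff_coeff_zero _ _).1 (mem_degreeLT.1 hdeg) i hi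

lemma aeval_ne_zero_of_linearIndependent (hω : LinearIndependent K fun i : Fin d ↦ ω ^ (i : ℕ))
    {P : K[X]} (hP : P ≠ 0) (hdeg : P.degree < d) : aeval ω P ≠ 0 := by
  intro h
  refine hP (injOn_aeval_of_linearIndependent hω hdeg ?_ (h.trans (map_zero _).symm))
  rw [Set.mem_ofPred_eq, degree_zero]
  exact WithBot.bot_lt_coe d

variable [DecidableEq K] {A B : Finset K} {D : ℕ}

lemma ncard_aeval_image_coeffBox (hω : LinearIndependent K fun i : Fin d ↦ ω ^ (i : ℕ))
    (hD : D ≤ d) : (aeval ω '' (coeffBox A D : Set K[X])).ncard = #A ^ D := by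
  rw [Set.InjOn.ncard_image, Set.ncard_coe_finset, card_coeffBox]
  refine (injOn_aeval_of_linearIndependent hω).mono fun P hP ↦ ?_
  exact (mem_coeffBox.1 hP).1.trans_le (Nat.cast_le.2 hD)

lemma degree_C_mul_mul_lt_of_mem_coeffBox (a : K) (hB : 0 ∉ B) {q l : K[X]} (hq : q ∈ coeffBox A D)
    (hl : l ∈ coeffBox B 2) : (C a * (q * l)).degree < (D + 1 : ℕ) := by
  rw [← smul_eq_C_mul]
  refine (degree_smul_le a (q * l)).trans_lt ?_
  rw [degree_mul, degree_eq_one_of_mem_coeffBox hB hl, Nat.cast_add_one]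
  exact WithBot.add_lt_add_right WithBot.one_ne_bot (mem_coeffBox.1 hq).1

lemma energy_aeval_mul_aeval_le (hω : LinearIndependent K fun i : Fin (D + 2) ↦ ω ^ (i : ℕ))
    (hA : 0 ∉ A) (hB : 0 ∉ B) {τ : ℕ} (hτ : ∀ c, #{x ∈ A ×ˢ B | x.1 * x.2 = c} ≤ τ) :
    (energy (coeffBox A (D + 1) ×ˢ coeffBox B 2) fun x ↦ aeval ω x.1 * aeval ω x.2) ≤
      #A ^ (D + 1) * #B ^ 2 * ((D + 1) * τ) := by
  have transfer := energy_comp_of_injOn (X := coeffBox A (D + 1) ×ˢ coeffBox B 2)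
    (f := fun x ↦ x.1 * x.2) (g := aeval ω) ((injOn_aeval_of_linearIndependent hω).mono ?_)
  · simp only [Function.comp_def, map_mul] at transfer
    rw [transfer, ← card_coeffBox, ← card_coeffBox, ← card_product]
    exact energy_le_card_mul (card_filter_mul_eq_le hA hB hτ)
  · rintro _ ⟨x, hx, rfl⟩
    rw [mem_coe, mem_product] at hx
    simpa only [C_1, one_mul, Set.mem_ofPred_eq] using
      degree_C_mul_mul_lt_of_mem_coeffBox 1 hB hx.1 hx.2

lemma energy_smul_aeval_mul_aeval_le {α : Type*} {X : Finset α} {g : α → K} {τ : ℕ}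
    (hω : LinearIndependent K fun i : Fin (D + 2) ↦ ω ^ (i : ℕ))
    (hA : 0 ∉ A) (hB : 0 ∉ B) (hg : ∀ x ∈ X, g x ≠ 0) (hτ : ∀ c, #{x ∈ X | g x = c} ≤ τ) :
    (energy (X ×ˢ (coeffBox A (D + 1) ×ˢ coeffBox B 2)) fun x ↦
      algebraMap K F (g x.1) * (aeval ω x.2.1 * aeval ω x.2.2)) ≤
      #X * τ * energy (coeffBox A (D + 1) ×ˢ coeffBox B 2) fun x ↦ Associates.mk (x.1 * x.2) := by
  classical
  have transfer := energy_comp_of_injOn (X := X ×ˢ (coeffBox A (D + 1) ×ˢ coeffBox B 2))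
    (f := fun x ↦ C (g x.1) * (x.2.1 * x.2.2)) (g := aeval ω)
    ((injOn_aeval_of_linearIndependent hω).mono ?_)
  · simp only [Function.comp_def, map_mul, aeval_C] at transfer
    rw [transfer]
    refine energy_mul_le (Y := coeffBox A (D + 1) ×ˢ coeffBox B 2) (g := fun x ↦ C (g x))
      (h := fun x ↦ x.1 * x.2) (fun x hx ↦ isUnit_C.2 (hg x hx).isUnit) (fun c ↦ ?_) fun x hx ↦ ?_
    · refine (card_le_card fun x hx ↦ ?_).trans (hτ (c.coeff 0))
      rw [mem_filter] at hx ⊢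
      exact ⟨hx.1, by rw [← hx.2, coeff_C_zero]⟩
    · rw [mem_product] at hx
      exact mul_ne_zero (ne_zero_of_mem_coeffBox hA hx.1) (ne_zero_of_mem_coeffBox hB hx.2)
  · rintro _ ⟨x, hx, rfl⟩
    simp only [mem_coe, mem_product] at hx
    exact degree_C_mul_mul_lt_of_mem_coeffBox _ hB hx.2.1 hx.2.2

end Evaluation

section EnergyBounds

open Polynomial

variable {p N M T m : ℕ} [Fact p.Prime] {F : Type*} {ω : F}

lemma energy_associates_residueBox_le (hT : ∀ n ≠ 0, n < p ^ 2 → #n.divisors ≤ T) (hN : N < p)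
    (hM : M < p) (hM₀ : 1 ≤ M) (hMM : M * M ≤ p) (hNN : N * N ≤ p * (4 * M ^ 2)) :
    (energy (coeffBox (residueInterval p N) (m + 2) ×ˢ coeffBox (residueInterval p M) 2)
      fun x ↦ Associates.mk (x.1 * x.2)) ≤ N ^ (m + 2) * M ^ 2 * (11 * T ^ 2 * M ^ 2) := by
  have NN_div : N * N / p ≤ 4 * M ^ 2 := Nat.div_le_of_le_mul hNN
  have MM_div : M * M / p ≤ 1 := Nat.div_le_of_le_mul (by rwa [mul_one])
  refine (energy_associates_coeffBox_mul_le zero_notMem_residueInterval zero_notMem_residueInterval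
    (card_mul_eq_le_of_card_divisors_le hT) (card_mul_eq_le_of_card_divisors_le hT)).trans ?_
  rw [card_residueInterval hN, card_residueInterval hM]
  refine Nat.mul_le_mul_left _ ?_
  calc
    T * (N * N / p + 1) * (T * (M * M / p + 1)) + M ^ 2
      ≤ T * (4 * M ^ 2 + M ^ 2) * (T * (1 + 1)) + T ^ 2 * M ^ 2 := by
      gcongr
      · exact Nat.one_le_pow _ _ hM₀
      · exact Nat.le_mul_of_pos_left _ (pow_pos (one_le_of_card_divisors_le hT) 2)
    _ = 11 * T ^ 2 * M ^ 2 := by ring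

variable [CommRing F] [Algebra (ZMod p) F]

lemma energy_aeval_residueBox_le (hω : LinearIndependent (ZMod p) fun i : Fin (m + 3) ↦ ω ^ (i : ℕ))
    (hT : ∀ n ≠ 0, n < p ^ 2 → #n.divisors ≤ T) (hN : N < p) (hM : M < p) (hNM : N * M < p) :
    (energy (coeffBox (residueInterval p N) (m + 2) ×ˢ coeffBox (residueInterval p M) 2)
      fun x ↦ aeval ω x.1 * aeval ω x.2) ≤
      N ^ (m + 2) * M ^ 2 * ((m + 2) * T) := by
  refine (energy_aeval_mul_aeval_le hω zero_notMem_residueInterval zero_notMem_residueInterval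
    (card_mul_eq_le_of_card_divisors_le hT)).trans_eq ?_
  rw [card_residueInterval hN, card_residueInterval hM, Nat.div_eq_of_lt hNM]
  ring

lemma energy_prod_algebraMap_mul_aeval_residueBox_le {n k : ℕ}
    (hω : LinearIndependent (ZMod p) fun i : Fin (m + 3) ↦ ω ^ (i : ℕ))
    (hT : ∀ n ≠ 0, n < p ^ 2 → #n.divisors ≤ T) (hn : n < p) (hnk : n ^ k < p) (hN : N < p)
    (hM : M < p) (hM₀ : 1 ≤ M) (hMM : M * M ≤ p) (hNN : N * N ≤ p * (4 * M ^ 2)) :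
    (energy ((Fintype.piFinset fun _ : Fin k ↦ residueInterval p n) ×ˢ
        (coeffBox (residueInterval p N) (m + 2) ×ˢ coeffBox (residueInterval p M) 2))
      fun x ↦ (∏ j, algebraMap (ZMod p) F (x.1 j)) *
        (aeval ω x.2.1 * aeval ω x.2.2)) ≤
      (n * T) ^ k * (N ^ (m + 2) * M ^ 2 * (11 * T ^ 2 * M ^ 2)) := by
  have prod_ne_zero (x : Fin k → ZMod p) (hx : x ∈ Fintype.piFinset fun _ ↦ residueInterval p n) :
      ∏ j, x j ≠ 0 :=
    prod_ne_zero_iff.2 fun j _ ↦ ne_of_mem_of_not_mem (Fintype.mem_piFinset.1 hx j)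
      zero_notMem_residueInterval
  have hT' (n) (hn₀ : n ≠ 0) (hnp : n < p) : #n.divisors ≤ T :=
    hT n hn₀ (hnp.trans_le (Nat.le_self_pow two_ne_zero p))
  have fiber_le := card_prod_eq_le_of_card_divisors_le (ι := Fin k) hT' (by rwa [Fintype.card_fin])
  simp only [← map_prod]
  refine (energy_smul_aeval_mul_aeval_le (g := fun x : Fin k → ZMod p ↦ ∏ j, x j) hω
    zero_notMem_residueInterval zero_notMem_residueInterval prod_ne_zero fiber_le).trans ?_
  rw [Fintype.card_piFinset, prod_const, card_univ, Fintype.card_fin, card_residueInterval hn,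
    ← mul_pow]
  exact Nat.mul_le_mul_left _ (energy_associates_residueBox_le hT hN hM hM₀ hMM hNN)

lemma energy_prod_algebraMap_mul_aeval_residueBox_le_pow {n k : ℕ} {θ : ℝ}
    (hω : LinearIndependent (ZMod p) fun i : Fin (m + 3) ↦ ω ^ (i : ℕ))
    (hT : ∀ n ≠ 0, n < p ^ 2 → #n.divisors ≤ T) (hk : k ≠ 0) (hnk : n ^ k < p) (hN : N < p)
    (hM : M < p) (hM₀ : 1 ≤ M) (hMM : M * M ≤ p) (hNN : N * N ≤ p * (4 * M ^ 2)) (hθ : 0 ≤ θ)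
    (hMn : (M : ℝ) ^ 2 ≤ (2 * (n : ℝ) ^ θ) ^ k) :
    (energy ((Fintype.piFinset fun _ : Fin k ↦ residueInterval p n) ×ˢ
        (coeffBox (residueInterval p N) (m + 2) ×ˢ coeffBox (residueInterval p M) 2))
      fun x ↦ (∏ j, algebraMap (ZMod p) F (x.1 j)) * (aeval ω x.2.1 * aeval ω x.2.2) : ℝ) ≤
      N ^ (m + 2) * M ^ 2 * (22 * T ^ 3 * (n : ℝ) ^ (1 + θ)) ^ k := by
  have hn : n < p := (Nat.le_self_pow hk n).trans_lt hnk
  have hT₁ : (1 : ℝ) ≤ T := by exact_mod_cast one_le_of_card_divisors_le hT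
  have one_le : (1 : ℝ) ≤ 11 * T ^ 2 := by nlinarith
  calc
    _ ≤ ((n * T) ^ k * (N ^ (m + 2) * M ^ 2 * (11 * T ^ 2 * M ^ 2)) : ℝ) := by
      exact_mod_cast energy_prod_algebraMap_mul_aeval_residueBox_le hω hT hn hnk hN hM hM₀ hMM hNN
    _ ≤ (n * T) ^ k * (N ^ (m + 2) * M ^ 2 * ((11 * T ^ 2) ^ k * (2 * (n : ℝ) ^ θ) ^ k)) := by
      gcongr
      exact le_self_pow₀ one_le hk
    _ = N ^ (m + 2) * M ^ 2 * (n * T * (11 * T ^ 2) * (2 * (n : ℝ) ^ θ)) ^ k := by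
      rw [mul_left_comm, ← mul_pow, ← mul_pow, mul_assoc (n * T : ℝ)]
    _ = N ^ (m + 2) * M ^ 2 * (22 * T ^ 3 * (n : ℝ) ^ (1 + θ)) ^ k := by
      rw [Real.rpow_one_add' n.cast_nonneg (by positivity)]
      ring

end EnergyBounds

section RealEstimates

lemma rpow_mul_prod_rpow_le {ι : Type*} [Fintype ι] {k : ι → ℕ} (hk : ∀ s, k s ≠ 0)
    (hksum : ∑ s, (1 : ℝ) / k s ≤ 1) {D H E₀ : ℝ} {E b : ι → ℝ} (hD : 1 ≤ D) (hH : 0 ≤ H)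
    (hE₀ : 0 ≤ E₀) (hE : ∀ s, 0 ≤ E s) (hb : ∀ s, 0 ≤ b s) (hE₀le : E₀ ≤ D * H)
    (hEle : ∀ s, E s ≤ H * b s ^ k s) :
    E₀ ^ (1 - ∑ s, (1 : ℝ) / k s) * ∏ s, E s ^ ((1 : ℝ) / k s) ≤ D * H * ∏ s, b s := by
  have hexp (s) : 0 ≤ (1 : ℝ) / k s := by positivity
  have E_rpow_le (s) : E s ^ ((1 : ℝ) / k s) ≤ H ^ ((1 : ℝ) / k s) * b s :=
    calc
      E s ^ ((1 : ℝ) / k s) ≤ (H * b s ^ k s) ^ ((1 : ℝ) / k s) :=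
        Real.rpow_le_rpow (hE s) (hEle s) (hexp s)
      _ = H ^ ((1 : ℝ) / k s) * b s := by
        rw [Real.mul_rpow hH (pow_nonneg (hb s) _), one_div,
          Real.pow_rpow_inv_natCast (hb s) (hk s)]
  have D_rpow_le : D ^ (1 - ∑ s, (1 : ℝ) / k s) ≤ D :=
    Real.rpow_le_self_of_one_le hD (sub_le_self 1 (sum_nonneg fun s _ ↦ hexp s))
  calc
    _ ≤ (D * H) ^ (1 - ∑ s, (1 : ℝ) / k s) * ∏ s, (H ^ ((1 : ℝ) / k s) * b s) := by
      gcongr with s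
      · exact prod_nonneg fun s _ ↦ Real.rpow_nonneg (hE s) _
      · exact fun s _ ↦ Real.rpow_nonneg (hE s) _
      · exact E_rpow_le s
    _ = D ^ (1 - ∑ s, (1 : ℝ) / k s) * H * ∏ s, b s := by
      rw [prod_mul_distrib, ← Real.rpow_sum_of_nonneg hH fun s _ ↦ hexp s,
        Real.mul_rpow (zero_le_one.trans hD) hH, ← mul_assoc, mul_assoc (D ^ _),
        ← Real.rpow_add_of_nonneg hH (sub_nonneg.2 hksum) (sum_nonneg fun s _ ↦ hexp s),
        sub_add_cancel, Real.rpow_one]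
    _ ≤ D * H * ∏ s, b s := by
      have := prod_nonneg fun s (_ : s ∈ univ) ↦ hb s
      gcongr

lemma two_le_of_sum_one_div_lt_one {ι : Type*} [Fintype ι] {k : ι → ℕ} (hk : ∀ s, 0 < k s)
    (hksum : ∑ s, (1 : ℝ) / k s < 1) (s : ι) : 2 ≤ k s := by
  have : (1 : ℝ) / k s < 1 :=
    (single_le_sum (f := fun s ↦ (1 : ℝ) / k s) (fun s _ ↦ by positivity) (mem_univ s)).trans_lt
      hksum
  rw [div_lt_one (by exact_mod_cast hk s)] at this
  exact_mod_cast this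

lemma mul_pow_le_exp {C D T L : ℝ} (w : ℕ) (hD : 1 ≤ D) (hT₀ : 0 ≤ T) (hL : 1 < L)
    (hT : T ≤ Real.exp (C * L / Real.log L)) :
    D * T ^ w ≤ Real.exp ((Real.log D + C * w) * L / Real.log L) := by
  have log_pos := Real.log_pos hL
  have log_le : Real.log L ≤ L := Real.log_le_self (by positivity)
  have D_le : D ≤ Real.exp (Real.log D * (L / Real.log L)) := by
    rw [← Real.log_le_iff_le_exp (by positivity)]
    exact le_mul_of_one_le_right (Real.log_nonneg hD) ((one_le_div log_pos).2 log_le)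
  calc
    D * T ^ w ≤ Real.exp (Real.log D * (L / Real.log L)) * Real.exp (C * L / Real.log L) ^ w := by
      gcongr
    _ = Real.exp ((Real.log D + C * w) * L / Real.log L) := by
      rw [← Real.exp_nat_mul, ← Real.exp_add]
      ring_nf

lemma le_two_mul_natFloor {y : ℝ} (hy : 1 ≤ y) : y ≤ 2 * ⌊y⌋₊ := by
  have floor_pos : (1 : ℝ) ≤ ⌊y⌋₊ := by exact_mod_cast Nat.le_floor (by exact_mod_cast hy)
  linarith [Nat.lt_floor_add_one y]

variable {p : ℕ}

lemma natFloor_rpow_mul_natFloor_rpow_le (hp : 1 ≤ p) {a b c : ℝ} (h : a + b ≤ c) :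
    (⌊(p : ℝ) ^ a⌋₊ * ⌊(p : ℝ) ^ b⌋₊ : ℝ) ≤ (p : ℝ) ^ c := by
  have one_le : (1 : ℝ) ≤ p := by exact_mod_cast hp
  calc
    (⌊(p : ℝ) ^ a⌋₊ * ⌊(p : ℝ) ^ b⌋₊ : ℝ) ≤ (p : ℝ) ^ a * (p : ℝ) ^ b := by
      gcongr <;> exact Nat.floor_le (by positivity)
    _ = (p : ℝ) ^ (a + b) := (Real.rpow_add (by positivity) a b).symm
    _ ≤ (p : ℝ) ^ c := Real.rpow_le_rpow_of_exponent_le one_le h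

lemma natFloor_rpow_mul_self_le (hp : 1 ≤ p) {σ μ : ℝ} (hμ₀ : 0 ≤ μ) (hσ : σ ≤ 1 / 2 + μ) :
    ⌊(p : ℝ) ^ σ⌋₊ * ⌊(p : ℝ) ^ σ⌋₊ ≤ p * (4 * ⌊(p : ℝ) ^ μ⌋₊ ^ 2) := by
  have one_le : (1 : ℝ) ≤ p := by exact_mod_cast hp
  have mul_self_le : (⌊(p : ℝ) ^ σ⌋₊ * ⌊(p : ℝ) ^ σ⌋₊ : ℝ) ≤ p * (4 * ⌊(p : ℝ) ^ μ⌋₊ ^ 2) :=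
    calc
      _ ≤ (p : ℝ) ^ (1 + (μ + μ)) := natFloor_rpow_mul_natFloor_rpow_le hp (by linarith)
      _ = p * ((p : ℝ) ^ μ) ^ 2 := by
        rw [Real.rpow_add (by positivity), Real.rpow_add (by positivity), Real.rpow_one, sq]
      _ ≤ p * (2 * ⌊(p : ℝ) ^ μ⌋₊) ^ 2 := by
        gcongr
        exact le_two_mul_natFloor (Real.one_le_rpow one_le hμ₀)
      _ = p * (4 * ⌊(p : ℝ) ^ μ⌋₊ ^ 2) := by ring
  exact_mod_cast mul_self_le

lemma natFloor_rpow_one_div_pow_lt (hp : p.Prime) {k : ℕ} (hk : 2 ≤ k) :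
    ⌊(p : ℝ) ^ ((1 : ℝ) / k)⌋₊ ^ k < p := by
  refine lt_of_le_of_ne ?_ fun h ↦ Nat.Prime.not_prime_pow hk (h.symm ▸ hp)
  have floor_pow_le : (⌊(p : ℝ) ^ ((1 : ℝ) / k)⌋₊ : ℝ) ^ k ≤ p :=
    calc
      _ ≤ ((p : ℝ) ^ ((1 : ℝ) / k)) ^ k := by
        gcongr
        exact Nat.floor_le (by positivity)
      _ = p := by rw [one_div, Real.rpow_inv_natCast_pow p.cast_nonneg (by omega)]
  exact_mod_cast floor_pow_le

lemma natFloor_rpow_sq_le (hp : 1 ≤ p) {k : ℕ} (hk : k ≠ 0) {μ : ℝ} (hμ₀ : 0 ≤ μ) (hμ : μ ≤ 1 / 2) :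
    (⌊(p : ℝ) ^ μ⌋₊ : ℝ) ^ 2 ≤
      (2 * (⌊(p : ℝ) ^ ((1 : ℝ) / k)⌋₊ : ℝ) ^ (2 * μ)) ^ k := by
  set n : ℝ := (⌊(p : ℝ) ^ ((1 : ℝ) / k)⌋₊ : ℝ)
  have one_le : (1 : ℝ) ≤ p := by exact_mod_cast hp
  have root_le : (p : ℝ) ^ ((1 : ℝ) / k) ≤ 2 * n :=
    le_two_mul_natFloor (Real.one_le_rpow one_le (by positivity))
  calc
    (⌊(p : ℝ) ^ μ⌋₊ : ℝ) ^ 2 ≤ ((p : ℝ) ^ μ) ^ 2 := by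
      gcongr
      exact Nat.floor_le (by positivity)
    _ = (((p : ℝ) ^ ((1 : ℝ) / k)) ^ (2 * μ)) ^ k := by
      rw [← Real.rpow_natCast, ← Real.rpow_natCast, ← Real.rpow_mul p.cast_nonneg,
        ← Real.rpow_mul p.cast_nonneg, ← Real.rpow_mul p.cast_nonneg]
      congr 1
      field_simp
      norm_num
    _ ≤ ((2 * n) ^ (2 * μ)) ^ k := by gcongr
    _ = (2 ^ (2 * μ) * n ^ (2 * μ)) ^ k := by rw [Real.mul_rpow zero_le_two (Nat.cast_nonneg _)]
    _ ≤ (2 * n ^ (2 * μ)) ^ k := by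
      gcongr
      exact Real.rpow_le_self_of_one_le one_le_two (by linarith)

end RealEstimates

section IntegerBoxes

open Polynomial

variable {p N D : ℕ} {F : Type*} [CommRing F] [Algebra (ZMod p) F]

lemma intCast_mem_residueInterval [NeZero p] (hN : N < p) {n : ℤ} (hn : n ∈ Icc (1 : ℤ) N) :
    (n : ZMod p) ∈ residueInterval p N := by
  rw [mem_Icc] at hn
  lift n to ℕ using by omega
  rw [residueInterval_eq_image hN, Int.cast_natCast]
  exact mem_image_of_mem _ (mem_Icc.2 ⟨by omega, by omega⟩)

lemma exists_intCast_eq_of_mem_residueInterval [NeZero p] {a : ZMod p}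
    (ha : a ∈ residueInterval p N) : ∃ n ∈ Icc (1 : ℤ) N, (n : ZMod p) = a := by
  rw [mem_residueInterval] at ha
  exact ⟨a.val, mem_Icc.2 ⟨by exact_mod_cast ha.1, by exact_mod_cast ha.2⟩, by simp⟩

lemma setOf_intCast_eq_image_residueInterval [NeZero p] (hN : N < p) :
    {z : F | ∃ n : ℤ, n ∈ Icc (1 : ℤ) N ∧ z = n} =
      algebraMap (ZMod p) F '' residueInterval p N := by
  ext z
  constructor
  · rintro ⟨n, hn, rfl⟩
    exact ⟨n, intCast_mem_residueInterval hN hn, map_intCast _ n⟩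
  · rintro ⟨a, ha, rfl⟩
    obtain ⟨n, hn, rfl⟩ := exists_intCast_eq_of_mem_residueInterval ha
    exact ⟨n, hn, map_intCast _ n⟩

lemma aeval_ofFn_intCast (ω : F) (x : Fin D → ℤ) :
    aeval ω (ofFn D fun i ↦ (x i : ZMod p)) =
      ∑ i, (x i : F) * ω ^ (i : ℕ) := by
  simp only [ofFn_eq_sum_monomial, map_sum, aeval_monomial, map_intCast]

lemma setOf_sum_intCast_eq_image_coeffBox [Fact p.Prime] (hN : N < p) (ω : F) :
    {z : F | ∃ x : Fin D → ℤ, (∀ i, x i ∈ Icc (1 : ℤ) N) ∧ z = ∑ i, (x i : F) * ω ^ (i : ℕ)} =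
      aeval ω '' (coeffBox (residueInterval p N) D : Set (ZMod p)[X]) := by
  ext z
  simp only [Set.mem_ofPred_eq, Set.mem_image, mem_coe, coeffBox, mem_map, Fintype.mem_piFinset,
    Function.Embedding.coeFn_mk, exists_exists_and_eq_and]
  constructor
  · rintro ⟨x, hx, rfl⟩
    exact ⟨fun i ↦ x i, fun i ↦ intCast_mem_residueInterval hN (hx i), aeval_ofFn_intCast ω x⟩
  · rintro ⟨v, hv, rfl⟩
    choose x hx hxv using fun i ↦ exists_intCast_eq_of_mem_residueInterval (hv i)
    exact ⟨x, hx, by rw [← aeval_ofFn_intCast (p := p), funext hxv]⟩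

lemma setOf_intCast_add_intCast_mul_eq_image_coeffBox [Fact p.Prime] (hN : N < p) (ω : F) :
    {z : F | ∃ y₀ y₁ : ℤ, y₀ ∈ Icc (1 : ℤ) N ∧ y₁ ∈ Icc (1 : ℤ) N ∧ z = y₀ + y₁ * ω} =
      aeval ω '' (coeffBox (residueInterval p N) 2 : Set (ZMod p)[X]) := by
  rw [← setOf_sum_intCast_eq_image_coeffBox hN]
  ext z
  constructor
  · rintro ⟨y₀, y₁, hy₀, hy₁, rfl⟩
    exact ⟨![y₀, y₁], Fin.forall_fin_two.2 ⟨hy₀, hy₁⟩, by simp⟩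
  · rintro ⟨y, hy, rfl⟩
    exact ⟨y 0, y 1, hy 0, hy 1, by simp⟩

lemma linearIndependent_zmod_of_forall_intCast {ι : Type*} [Fintype ι] {v : ι → F}
    (hv : ∀ a : ι → ℤ, ∑ i, (a i : F) * v i = 0 → ∀ i, (p : ℤ) ∣ a i) :
    LinearIndependent (ZMod p) v := by
  rw [Fintype.linearIndependent_iff]
  intro a ha i
  choose b hb using fun i ↦ ZMod.intCast_surjective (a i)
  rw [← hb, ZMod.intCast_zmod_eq_zero_iff_dvd]
  refine hv b ?_ i
  simpa only [← hb, Algebra.smul_def, map_intCast] using ha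

end IntegerBoxes

section MainEstimate

open Polynomial

variable {p m T : ℕ} [Fact p.Prime] {F : Type*} [Field F] [Algebra (ZMod p) F] {ω : F}

lemma aeval_ne_zero_of_mem_coeffBox {N D d : ℕ}
    (hω : LinearIndependent (ZMod p) fun i : Fin d ↦ ω ^ (i : ℕ)) (hD : D + 1 ≤ d) {P : (ZMod p)[X]}
    (hP : P ∈ coeffBox (residueInterval p N) (D + 1)) : aeval ω P ≠ 0 :=
  aeval_ne_zero_of_linearIndependent hω
    (ne_zero_of_mem_coeffBox zero_notMem_residueInterval hP)
    ((mem_coeffBox.1 hP).1.trans_le (Nat.cast_le.2 hD))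

variable [Finite F] {ι : Type*} [Fintype ι] [DecidableEq ι] {k : ι → ℕ}

lemma energy_prod_mul_residueBox_le {N M : ℕ} {n : ι → ℕ} {θ : ℝ}
    (hω : LinearIndependent (ZMod p) fun i : Fin (m + 3) ↦ ω ^ (i : ℕ))
    (hT : ∀ n ≠ 0, n < p ^ 2 → #n.divisors ≤ T) (hk : ∀ s, k s ≠ 0)
    (hksum : ∑ s, (1 : ℝ) / k s ≤ 1) (hn : ∀ s, n s ^ k s < p) (hM₀ : 1 ≤ M)
    (hNM : N * M < p) (hMM : M * M ≤ p) (hNN : N * N ≤ p * (4 * M ^ 2)) (hθ : 0 ≤ θ)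
    (hMn : ∀ s, (M : ℝ) ^ 2 ≤ (2 * (n s : ℝ) ^ θ) ^ k s) :
    (energy ((Fintype.piFinset fun s ↦ residueInterval p (n s)) ×ˢ
        (coeffBox (residueInterval p N) (m + 2) ×ˢ coeffBox (residueInterval p M) 2))
      fun x ↦ (∏ s, algebraMap (ZMod p) F (x.1 s)) * (aeval ω x.2.1 * aeval ω x.2.2) : ℝ) ≤
      ((m + 2) * T) * (N ^ (m + 2) * M ^ 2) * ∏ s, 22 * T ^ 3 * (n s : ℝ) ^ (1 + θ) := by
  have hN : N < p := (Nat.le_mul_of_pos_right N hM₀).trans_lt hNM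
  have hM : M < p := by nlinarith [(Fact.out : p.Prime).two_le]
  have isUnit_algebraMap (s) (a) (ha : a ∈ residueInterval p (n s)) :
      IsUnit (algebraMap (ZMod p) F a) :=
    (ne_of_mem_of_not_mem ha zero_notMem_residueInterval).isUnit.map _
  have isUnit_aeval (x) (hx : x ∈ coeffBox (residueInterval p N) (m + 2) ×ˢ
      coeffBox (residueInterval p M) 2) : IsUnit (aeval ω x.1 * aeval ω x.2) := by
    rw [mem_product] at hx
    exact (mul_ne_zero (aeval_ne_zero_of_mem_coeffBox hω (by omega) hx.1)
      (aeval_ne_zero_of_mem_coeffBox hω (by omega) hx.2)).isUnit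
  have one_le : (1 : ℝ) ≤ (m + 2) * T := by
    exact_mod_cast Nat.mul_pos (Nat.succ_pos _) (one_le_of_card_divisors_le hT)
  have energy_zero_le := energy_aeval_residueBox_le hω hT hN hM hNM
  rw [mul_comm] at energy_zero_le
  exact (energy_prod_mul_le isUnit_algebraMap isUnit_aeval hk hksum).trans
    (rpow_mul_prod_rpow_le hk hksum one_le (by positivity) (Nat.cast_nonneg _)
      (fun _ ↦ Nat.cast_nonneg _) (fun _ ↦ by positivity) (by exact_mod_cast energy_zero_le)
      fun s ↦ energy_prod_algebraMap_mul_aeval_residueBox_le_pow hω hT (hk s) (hn s) hN hM hM₀ hMM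
        hNN hθ (hMn s))

lemma energy_prod_mul_residueBox_natFloor_le {σ μ : ℝ} (hμ₀ : 0 ≤ μ) (hμ : μ ≤ 1 / 2)
    (hσμ : σ + μ < 1) (hσ : σ ≤ 1 / 2 + μ)
    (hω : LinearIndependent (ZMod p) fun i : Fin (m + 3) ↦ ω ^ (i : ℕ))
    (hT : ∀ n ≠ 0, n < p ^ 2 → #n.divisors ≤ T) (hk : ∀ s, 2 ≤ k s)
    (hksum : ∑ s, (1 : ℝ) / k s ≤ 1) :
    (energy ((Fintype.piFinset fun s ↦ residueInterval p ⌊(p : ℝ) ^ ((1 : ℝ) / k s)⌋₊) ×ˢ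
        (coeffBox (residueInterval p ⌊(p : ℝ) ^ σ⌋₊) (m + 2) ×ˢ
          coeffBox (residueInterval p ⌊(p : ℝ) ^ μ⌋₊) 2))
      fun x ↦ (∏ s, algebraMap (ZMod p) F (x.1 s)) * (aeval ω x.2.1 * aeval ω x.2.2) : ℝ) ≤
      ((m + 2) * T) * (⌊(p : ℝ) ^ σ⌋₊ ^ (m + 2) * ⌊(p : ℝ) ^ μ⌋₊ ^ 2) *
        ∏ s, 22 * T ^ 3 * (⌊(p : ℝ) ^ ((1 : ℝ) / k s)⌋₊ : ℝ) ^ (1 + 2 * μ) := by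
  have hp : 1 ≤ p := (Fact.out : p.Prime).one_le
  have hp' : (1 : ℝ) < p := by exact_mod_cast (Fact.out : p.Prime).one_lt
  have hk₀ (s) : k s ≠ 0 := by have := hk s; omega
  have floor_mul_floor_lt : (⌊(p : ℝ) ^ σ⌋₊ * ⌊(p : ℝ) ^ μ⌋₊ : ℝ) < p :=
    (natFloor_rpow_mul_natFloor_rpow_le hp le_rfl).trans_lt (Real.rpow_lt_self_of_one_lt hp' hσμ)
  have floor_mul_self_le : (⌊(p : ℝ) ^ μ⌋₊ * ⌊(p : ℝ) ^ μ⌋₊ : ℝ) ≤ p := by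
    simpa only [Real.rpow_one] using
      natFloor_rpow_mul_natFloor_rpow_le hp (by linarith : μ + μ ≤ 1)
  exact energy_prod_mul_residueBox_le hω hT hk₀ hksum
    (fun s ↦ natFloor_rpow_one_div_pow_lt Fact.out (hk s))
    (Nat.le_floor (by exact_mod_cast Real.one_le_rpow hp'.le hμ₀))
    (by exact_mod_cast floor_mul_floor_lt) (by exact_mod_cast floor_mul_self_le)
    (natFloor_rpow_mul_self_le hp hμ₀ hσ) (by positivity)
    fun s ↦ natFloor_rpow_sq_le hp (hk₀ s) hμ₀ hμ

lemma energy_prod_mul_residueBox_natFloor_le_exp (hp : 81 < p) {σ μ : ℝ} (hμ₀ : 0 ≤ μ)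
    (hμ : μ ≤ 1 / 2) (hσμ : σ + μ < 1) (hσ : σ ≤ 1 / 2 + μ)
    (hω : LinearIndependent (ZMod p) fun i : Fin (m + 3) ↦ ω ^ (i : ℕ)) (hk : ∀ s, 2 ≤ k s)
    (hksum : ∑ s, (1 : ℝ) / k s ≤ 1) :
    (energy ((Fintype.piFinset fun s ↦ residueInterval p ⌊(p : ℝ) ^ ((1 : ℝ) / k s)⌋₊) ×ˢ
        (coeffBox (residueInterval p ⌊(p : ℝ) ^ σ⌋₊) (m + 2) ×ˢ
          coeffBox (residueInterval p ⌊(p : ℝ) ^ μ⌋₊) 2))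
      fun x ↦ (∏ s, algebraMap (ZMod p) F (x.1 s)) * (aeval ω x.2.1 * aeval ω x.2.2) : ℝ) ≤
      Real.exp ((Real.log ((m + 2) * 22 ^ Fintype.card ι : ℕ) + 40 * (3 * Fintype.card ι + 1 : ℕ)) *
          Real.log p / Real.log (Real.log p)) *
        (⌊(p : ℝ) ^ σ⌋₊ ^ (m + 2) * ⌊(p : ℝ) ^ μ⌋₊ ^ 2) *
          ∏ s, (⌊(p : ℝ) ^ ((1 : ℝ) / k s)⌋₊ : ℝ) ^ (1 + 2 * μ) := by
  have hL := four_le_log hp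
  set T := ⌊Real.exp (40 * Real.log p / Real.log (Real.log p))⌋₊
  have hT : (T : ℝ) ≤ Real.exp (40 * Real.log p / Real.log (Real.log p)) :=
    Nat.floor_le (Real.exp_pos _).le
  calc
    _ ≤ ((m + 2) * T : ℝ) * (⌊(p : ℝ) ^ σ⌋₊ ^ (m + 2) * ⌊(p : ℝ) ^ μ⌋₊ ^ 2) *
        ∏ s, 22 * T ^ 3 * (⌊(p : ℝ) ^ ((1 : ℝ) / k s)⌋₊ : ℝ) ^ (1 + 2 * μ) :=
      energy_prod_mul_residueBox_natFloor_le hμ₀ hμ hσμ hσ hω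
        (fun n hn hnp ↦ card_divisors_le_natFloor_exp hL hn hnp) hk hksum
    _ = ((m + 2) * 22 ^ Fintype.card ι : ℕ) * T ^ (3 * Fintype.card ι + 1) *
        (⌊(p : ℝ) ^ σ⌋₊ ^ (m + 2) * ⌊(p : ℝ) ^ μ⌋₊ ^ 2) *
          ∏ s, (⌊(p : ℝ) ^ ((1 : ℝ) / k s)⌋₊ : ℝ) ^ (1 + 2 * μ) := by
      simp only [prod_mul_distrib, prod_const, card_univ, pow_succ, pow_mul]
      push_cast
      ring
    _ ≤ _ := by
      gcongr
      exact mul_pow_le_exp _ (Nat.one_le_cast.2 (Nat.one_le_iff_ne_zero.2 (by positivity)))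
        T.cast_nonneg (by linarith) hT

end MainEstimate

theorem stmt5_general {d : ℕ} (hd : 3 ≤ d) {ι : Type*} [Fintype ι] {k : ι → ℕ}
    (hk : ∀ s, 2 ≤ k s) (hksum : ∑ s, (1 : ℝ) / k s ≤ 1) :
    ∃ c : ℝ, 0 < c ∧ ∃ p₀ : ℕ, ∀ p : ℕ, p.Prime → p₀ < p →
      ∀ (F : Type*) [Field F] [Finite F] [Algebra (ZMod p) F] (ω : F),
        LinearIndependent (ZMod p) (fun i : Fin d ↦ ω ^ (i : ℕ)) →
      ∀ σ μ : ℝ, 0 ≤ μ → μ ≤ 1 / 2 → σ + μ < 1 → σ ≤ 1 / 2 + μ →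
      ∀ (Q Q₀ : Set F) (I : ι → Set F),
        Q = {z : F | ∃ x : Fin (d - 1) → ℤ,
              (∀ i, x i ∈ Icc (1 : ℤ) ⌊(p : ℝ) ^ σ⌋) ∧ z = ∑ i, (x i : F) * ω ^ (i : ℕ)} →
        Q₀ = {z : F | ∃ y₀ y₁ : ℤ,
              y₀ ∈ Icc (1 : ℤ) ⌊(p : ℝ) ^ μ⌋ ∧ y₁ ∈ Icc (1 : ℤ) ⌊(p : ℝ) ^ μ⌋ ∧
              z = (y₀ : F) + (y₁ : F) * ω} →
        (∀ s, I s = {z : F | ∃ n : ℤ, n ∈ Icc (1 : ℤ) ⌊(p : ℝ) ^ ((1 : ℝ) / k s)⌋ ∧ z = n}) →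
        (Nat.card {t : ((ι → F) × F × F) × ((ι → F) × F × F) //
            (∀ s, t.1.1 s ∈ I s) ∧ t.1.2.1 ∈ Q ∧ t.1.2.2 ∈ Q₀ ∧
            (∀ s, t.2.1 s ∈ I s) ∧ t.2.2.1 ∈ Q ∧ t.2.2.2 ∈ Q₀ ∧
            (∀ s, t.1.1 s ≠ 0) ∧ t.1.2.1 ≠ 0 ∧ t.1.2.2 ≠ 0 ∧
            (∀ s, t.2.1 s ≠ 0) ∧ t.2.2.1 ≠ 0 ∧ t.2.2.2 ≠ 0 ∧
            (∏ s, t.1.1 s) * t.1.2.1 * t.1.2.2 = (∏ s, t.2.1 s) * t.2.2.1 * t.2.2.2} : ℝ)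
          ≤ Real.exp (c * Real.log p / Real.log (Real.log p)) * Q.ncard * Q₀.ncard *
              ∏ s, ((I s).ncard : ℝ) ^ (1 + 2 * μ) := by
  classical
  obtain ⟨m, rfl⟩ := Nat.exists_eq_add_of_le' hd
  refine ⟨Real.log ((m + 2) * 22 ^ Fintype.card ι : ℕ) + 40 * (3 * Fintype.card ι + 1 : ℕ),
    by positivity, 81, ?_⟩
  intro p hp hp₀ F _ _ _ ω hω σ μ hμ₀ hμ hσμ hσ Q Q₀ I hQ hQ₀ hI
  have : Fact p.Prime := ⟨hp⟩
  have floor_eq (a : ℝ) : ⌊(p : ℝ) ^ a⌋ = ⌊(p : ℝ) ^ a⌋₊ :=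
    (Int.natCast_floor_eq_floor (by positivity)).symm
  have floor_lt {a : ℝ} (ha : a < 1) : ⌊(p : ℝ) ^ a⌋₊ < p := by
    rw [Nat.floor_lt (by positivity)]
    exact Real.rpow_lt_self_of_one_lt (by exact_mod_cast hp.one_lt) ha
  have hσ₁ := floor_lt (by linarith : σ < 1)
  have hμ₁ := floor_lt (by linarith : μ < 1)
  have hk₁ (s) := floor_lt (by rw [one_div]; exact inv_lt_one_of_one_lt₀ (by exact_mod_cast hk s) :
    (1 : ℝ) / k s < 1)
  rw [floor_eq, setOf_sum_intCast_eq_image_coeffBox hσ₁] at hQ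
  rw [floor_eq, setOf_intCast_add_intCast_mul_eq_image_coeffBox hμ₁] at hQ₀
  simp only [floor_eq, setOf_intCast_eq_image_residueInterval (hk₁ _)] at hI
  have ncard_Q : Q.ncard = ⌊(p : ℝ) ^ σ⌋₊ ^ (m + 2) := by
    rw [hQ, ncard_aeval_image_coeffBox hω (by omega), card_residueInterval hσ₁]
    rfl
  have ncard_Q₀ : Q₀.ncard = ⌊(p : ℝ) ^ μ⌋₊ ^ 2 := by
    rw [hQ₀, ncard_aeval_image_coeffBox hω (by omega), card_residueInterval hμ₁]
  have ncard_I (s) : (I s).ncard = ⌊(p : ℝ) ^ ((1 : ℝ) / k s)⌋₊ := by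
    rw [hI, Set.ncard_image_of_injective _ (FaithfulSMul.algebraMap_injective _ F),
      Set.ncard_coe_finset, card_residueInterval (hk₁ s)]
  refine (Nat.cast_le.2 (card_le_energy_prod_mul fun t ht ↦ ?_)).trans
    ((energy_prod_mul_residueBox_natFloor_le_exp hp₀ hμ₀ hμ hσμ hσ hω hk hksum).trans_eq ?_)
  · obtain ⟨hx, hq, hl, hx', hq', hl', -, -, -, -, -, -, heq⟩ := ht
    simp only [hI, hQ, hQ₀] at hx hq hl hx' hq' hl'
    exact ⟨⟨hx, hq, hl⟩, ⟨hx', hq', hl'⟩, heq⟩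
  · simp only [ncard_Q, ncard_Q₀, ncard_I, Nat.cast_pow, mul_assoc]

/-- multiplicative energy bound
`E(I₁, …, I_r, Q, Q₀) ≤ exp(c log p / log log p) |Q||Q₀| ∏_s |I_s|^{(19−4σ)/10}`
in `F_{p^d}`, where `I_s = [1, p^{1/k_s}]` with `∑ 1/k_s < 1`, and `Q`, `Q₀`
are as in the previous statements. -/
theorem stmt5 (d : ℕ) (hd : 3 ≤ d) (r : ℕ) (hr : 1 ≤ r)
    (k : Fin r → ℕ) (hk : ∀ s, 0 < k s) (hksum : ∑ s, (1 : ℝ) / (k s) < 1) :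
    ∃ c : ℝ, 0 < c ∧ ∃ p₀ : ℕ, ∀ p : ℕ, p.Prime → p₀ < p →
      ∀ (F : Type) [Field F] [Fintype F], Fintype.card F = p ^ d →
      ∀ ω : F,
        (∀ cf : Fin d → ℤ, (∑ i, (cf i : F) * ω ^ (i : ℕ)) = 0 → ∀ i, (p : ℤ) ∣ cf i) →
        (∀ z : F, ∃ cf : Fin d → ℤ, z = ∑ i, (cf i : F) * ω ^ (i : ℕ)) →
      ∀ σ : ℝ, 0 < σ → σ < 11 / 16 →
      ∀ Q Q₀ : Set F, ∀ I : Fin r → Set F,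
        Q = {z : F | ∃ x : Fin (d - 1) → ℤ,
              (∀ i, x i ∈ Finset.Icc (1 : ℤ) ⌊(p : ℝ) ^ σ⌋) ∧
              z = ∑ i, (x i : F) * ω ^ (i : ℕ)} →
        Q₀ = {z : F | ∃ y₀ y₁ : ℤ,
              y₀ ∈ Finset.Icc (1 : ℤ) ⌊(p : ℝ) ^ ((9 : ℝ) / 20 - σ / 5)⌋ ∧
              y₁ ∈ Finset.Icc (1 : ℤ) ⌊(p : ℝ) ^ ((9 : ℝ) / 20 - σ / 5)⌋ ∧
              z = (y₀ : F) + (y₁ : F) * ω} →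
        (∀ s : Fin r, I s = {z : F | ∃ n : ℤ,
              n ∈ Finset.Icc (1 : ℤ) ⌊(p : ℝ) ^ ((1 : ℝ) / (k s))⌋ ∧ z = (n : F)}) →
        -- multiplicative energy `E(I₁, …, I_r, Q, Q₀)`
        (Nat.card {t : ((Fin r → F) × F × F) × ((Fin r → F) × F × F) //
            (∀ s, t.1.1 s ∈ I s) ∧ t.1.2.1 ∈ Q ∧ t.1.2.2 ∈ Q₀ ∧
            (∀ s, t.2.1 s ∈ I s) ∧ t.2.2.1 ∈ Q ∧ t.2.2.2 ∈ Q₀ ∧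
            (∀ s, t.1.1 s ≠ 0) ∧ t.1.2.1 ≠ 0 ∧ t.1.2.2 ≠ 0 ∧
            (∀ s, t.2.1 s ≠ 0) ∧ t.2.2.1 ≠ 0 ∧ t.2.2.2 ≠ 0 ∧
            (∏ s, t.1.1 s) * t.1.2.1 * t.1.2.2 = (∏ s, t.2.1 s) * t.2.2.1 * t.2.2.2} : ℝ)
          ≤ Real.exp (c * Real.log p / Real.log (Real.log p)) * Q.ncard * Q₀.ncard *
              ∏ s, ((I s).ncard : ℝ) ^ ((19 - 4 * σ) / 10) := by
  obtain ⟨c, hc, p₀, energy_le⟩ :=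
    stmt5_general hd (two_le_of_sum_one_div_lt_one hk hksum) hksum.le
  refine ⟨c, hc, p₀, fun p hp hp₀ F _ _ hF ω hω _ σ hσ₀ hσ Q Q₀ I hQ hQ₀ hI ↦ ?_⟩
  have : Fact p.Prime := ⟨hp⟩
  have : CharP F p := charP_of_card_eq_prime_pow hF
  let _ : Algebra (ZMod p) F := ZMod.algebra F p
  rw [show (19 - 4 * σ) / 10 = 1 + 2 * (9 / 20 - σ / 5) by ring]
  exact energy_le p hp hp₀ F ω (linearIndependent_zmod_of_forall_intCast hω) σ (9 / 20 - σ / 5)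
    (by linarith) (by linarith) (by linarith) (by linarith) Q Q₀ I hQ hQ₀ hI
end

section
/- For every integer k ≥ 1 there is a constant c > 0 such that the following holds for all sufficiently large primes p. Let λ₁ ∈ F_p, let λ₂, λ₃ ∈ F_p be such that X² + λ₂X + λ₃ is irreducible over F_p with roots ω₂, ω₃ ∈ F_{p²}, let I, J ⊆ [1, p−1] be intervals of integers with p^{3/8} ≤ |I|, |J| < p^{1/2}, let I₀ be the set of integers in [1, p^{3/8}/4], and let K be the set of integers in [1, p^{3/(2k)}]. Then the number of tuples (x, y, x₀, y₀, s, x', y', x₀', y₀', s') ∈ (I × J × I₀ × I₀ × K)² such that, for each μ ∈ {λ₁, ω₂, ω₃}, s(x − μy)(x₀ − μy₀) = s'(x' − μy')(x₀' − μy₀') with all these factors nonzero, is at most exp(c · log p / log log p) · p^{3/k} · (|I||J|)^{2 − 1/k}. -/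
open Finset Polynomial

/-!
Equal products at the three distinct points `λ₁, ω₂, ω₃` mean that two polynomials of degree at
most two agree there, hence coincide. Comparing leading coefficients and roots,
`s y y₀ = s' y' y₀'` and `{x / y, x₀ / y₀} = {x' / y', x₀' / y₀'}`. For fixed points the first
condition leaves at most `(|K| / p + 1) |K| ≤ 2 p ^ (2 / k)` pairs `(s, s')`. By Cauchy–Schwarz the
second one has at most `2 E₁ E₀` solutions, where `E₁` and `E₀` are the energies of the ratio map
on `I × J` and on `I₀ × I₀`.

The integer points with a given ratio in a box `A × B` of area at most `p` are collinear over the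
integers: the determinant spanned by three of them vanishes modulo `p` and is smaller than `p`. If
there are `n ≥ 2` of them, on a line with primitive direction `(u, v)`, then
`n² |u v| ≤ 4 |A| |B|`, and the ratio is `u / v`. Summing over `(u, v)` bounds the energy by
`|A| |B|` up to two logarithms. Since `|I| |J| ≥ p ^ (3 / 4)`, the resulting estimate beats the
claim by a factor `p ^ (1 / (4 k))`, which absorbs the logarithms.
-/

section Collisions

variable {α γ : Type*} [DecidableEq γ]

/-- The pairs in `A × B` with equal values under `f`. On the diagonal `A = B`, their number is the
energy of `f` on `A`, that is, the sum of the squares of the fibre sizes. -/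
def collisions (f : α → γ) (A B : Finset α) : Finset (α × α) :=
  {q ∈ A ×ˢ B | f q.1 = f q.2}

lemma mem_collisions {f : α → γ} {A B : Finset α} {a b : α} :
    (a, b) ∈ collisions f A B ↔ (a ∈ A ∧ b ∈ B) ∧ f a = f b := by
  simp only [collisions, mem_filter, mem_product]

lemma card_collisions_eq_sum {f : α → γ} {A : Finset α} (B : Finset α) {C : Finset γ}
    (hC : ∀ a ∈ A, f a ∈ C) :
    #(collisions f A B) = ∑ c ∈ C, #{a ∈ A | f a = c} * #{b ∈ B | f b = c} := by
  have hmaps : ∀ q ∈ collisions f A B, f q.1 ∈ C := fun q hq => hC _ (mem_collisions.1 hq).1.1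
  rw [card_eq_sum_card_fiberwise hmaps]
  refine sum_congr rfl fun c _ => ?_
  rw [← card_product]
  congr 1
  ext ⟨a, b⟩
  simp only [mem_filter, mem_product, mem_collisions]
  grind

lemma card_collisions_sq_le (f : α → γ) (A B : Finset α) :
    #(collisions f A B) ^ 2 ≤ #(collisions f A A) * #(collisions f B B) := by
  classical
  set C := (A ∪ B).image f
  have hA : ∀ a ∈ A, f a ∈ C := fun a ha => mem_image_of_mem f (mem_union_left B ha)
  have hB : ∀ b ∈ B, f b ∈ C := fun b hb => mem_image_of_mem f (mem_union_right A hb)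
  simp only [card_collisions_eq_sum _ hA, card_collisions_eq_sum _ hB, ← sq]
  exact sum_mul_sq_le_sq_mul_sq _ _ _

lemma card_collisions_sym2_le (f : α → γ) (A B : Finset α) :
    #(collisions (fun v => s(f v.1, f v.2)) (A ×ˢ B) (A ×ˢ B)) ≤
      2 * (#(collisions f A A) * #(collisions f B B)) := by
  classical
  set M := collisions (fun v => s(f v.1, f v.2)) (A ×ˢ B) (A ×ˢ B) with hM
  have hstraight : #{q ∈ M | f q.1.1 = f q.2.1 ∧ f q.1.2 = f q.2.2} ≤
      #(collisions f A A ×ˢ collisions f B B) := by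
    apply card_le_card_of_injOn fun q => ((q.1.1, q.2.1), (q.1.2, q.2.2))
    · rintro ⟨⟨v, w⟩, v', w'⟩ hq
      simp only [hM, coe_filter, Set.mem_ofPred_eq, mem_collisions, mem_product] at hq
      simp only [coe_product, Set.mem_prod, mem_coe, mem_collisions]
      tauto
    · rintro ⟨⟨v, w⟩, v', w'⟩ - ⟨⟨x, y⟩, x', y'⟩ - h
      simp_all only [Prod.mk.injEq]
  have hcrossed : #{q ∈ M | f q.1.1 = f q.2.2 ∧ f q.1.2 = f q.2.1} ≤
      #(collisions f A B ×ˢ collisions f A B) := by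
    apply card_le_card_of_injOn fun q => ((q.1.1, q.2.2), (q.2.1, q.1.2))
    · rintro ⟨⟨v, w⟩, v', w'⟩ hq
      simp only [hM, coe_filter, Set.mem_ofPred_eq, mem_collisions, mem_product] at hq
      simp only [coe_product, Set.mem_prod, mem_coe, mem_collisions]
      grind
    · rintro ⟨⟨v, w⟩, v', w'⟩ - ⟨⟨x, y⟩, x', y'⟩ - h
      simp_all only [Prod.mk.injEq]
  have hcover : M = {q ∈ M | f q.1.1 = f q.2.1 ∧ f q.1.2 = f q.2.2} ∪
      {q ∈ M | f q.1.1 = f q.2.2 ∧ f q.1.2 = f q.2.1} := by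
    rw [← filter_or, eq_comm, filter_eq_self]
    exact fun q hq => Sym2.eq_iff.1 (mem_collisions.1 hq).2
  calc #M ≤ #(collisions f A A ×ˢ collisions f B B) + #(collisions f A B ×ˢ collisions f A B) := by
        rw [hcover]
        exact (card_union_le _ _).trans (add_le_add hstraight hcrossed)
    _ ≤ 2 * (#(collisions f A A) * #(collisions f B B)) := by
        simp only [card_product, ← sq]
        linarith [card_collisions_sq_le f A B]

end Collisions

section Factorization

variable {F : Type*} [Field F]

lemma eq_and_sym2_eq_of_eq_on_three_points {μ : Fin 3 → F} (hμ : Function.Injective μ)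
    {a a' r t r' t' : F} (ha : a ≠ 0)
    (h : ∀ i, a * ((μ i - r) * (μ i - t)) = a' * ((μ i - r') * (μ i - t'))) :
    a = a' ∧ s(r, t) = s(r', t') := by
  have hdeg (a r t : F) :
      (C a * ((X - C r) * (X - C t))).degree < (#(univ : Finset (Fin 3)) : WithBot ℕ) := by
    have : (C a * ((X - C r) * (X - C t))).degree ≤ 2 := by compute_degree
    exact this.trans_lt (by norm_num)
  have hlead (a r t : F) : (C a * ((X - C r) * (X - C t))).leadingCoeff = a := by
    simp only [leadingCoeff_mul, leadingCoeff_C, leadingCoeff_X_sub_C, mul_one]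
  have hpoly : C a * ((X - C r) * (X - C t)) = C a' * ((X - C r') * (X - C t')) :=
    eq_of_degrees_lt_of_eval_index_eq univ hμ.injOn (hdeg a r t) (hdeg a' r' t')
      fun i _ => by simpa using h i
  obtain rfl : a = a' := by rw [← hlead a r t, hpoly, hlead]
  have hroots := mul_left_cancel₀ (C_ne_zero.2 ha) hpoly
  have hr : (r - r') * (r - t') = 0 := by simpa using (congrArg (eval r) hroots).symm
  refine ⟨rfl, Sym2.eq_iff.2 ?_⟩
  rcases mul_eq_zero.1 hr with hr | hr <;> obtain rfl := sub_eq_zero.1 hr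
  · have ht := mul_left_cancel₀ (X_sub_C_ne_zero r) hroots
    exact .inl ⟨rfl, C_injective (sub_right_injective ht)⟩
  · rw [mul_comm (X - C r')] at hroots
    have ht := mul_left_cancel₀ (X_sub_C_ne_zero r) hroots
    exact .inr ⟨rfl, C_injective (sub_right_injective ht)⟩

lemma eq_and_sym2_div_eq_of_eq_on_three_points {μ : Fin 3 → F} (hμ : Function.Injective μ)
    {x y x₀ y₀ s x' y' x₀' y₀' s' : F} (hs : s ≠ 0)
    (hy : y ≠ 0) (hy₀ : y₀ ≠ 0) (hy' : y' ≠ 0) (hy₀' : y₀' ≠ 0)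
    (h : ∀ i, s * (x - μ i * y) * (x₀ - μ i * y₀) = s' * (x' - μ i * y') * (x₀' - μ i * y₀')) :
    s * (y * y₀) = s' * (y' * y₀') ∧ s(x / y, x₀ / y₀) = s(x' / y', x₀' / y₀') := by
  have hfactor {x y x₀ y₀ : F} (s m : F) (hy : y ≠ 0) (hy₀ : y₀ ≠ 0) :
      s * (x - m * y) * (x₀ - m * y₀) = s * (y * y₀) * ((m - x / y) * (m - x₀ / y₀)) := by
    field_simp
    ring
  refine eq_and_sym2_eq_of_eq_on_three_points hμ (mul_ne_zero hs (mul_ne_zero hy hy₀)) fun i => ?_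
  rw [← hfactor s _ hy hy₀, ← hfactor s' _ hy' hy₀', h i]

end Factorization

section IntegerPoints

lemma card_sub_one_mul_le_of_dvd_sub {S : Finset ℤ} {a b : ℤ} (d : ℕ) (hS : S ⊆ Icc a b)
    (hdvd : ∀ x ∈ S, ∀ y ∈ S, (d : ℤ) ∣ x - y) : (#S - 1) * d ≤ #(Icc a b) - 1 := by
  rcases d.eq_zero_or_pos with rfl | hd
  · simp only [mul_zero, zero_le]
  rcases S.eq_empty_or_nonempty with rfl | ⟨m, hm⟩
  · simp only [card_empty, zero_tsub, zero_mul, zero_le]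
  have hab : a ≤ b := nonempty_Icc.1 ⟨m, hS hm⟩
  have hd' : (0 : ℤ) < d := by exact_mod_cast hd
  have hcard : #S ≤ #(Icc 0 ((b - a) / d)) := by
    apply card_le_card_of_injOn fun x => (x - a) / d
    · intro x hx
      obtain ⟨hax, hxb⟩ := mem_Icc.1 (hS hx)
      exact mem_coe.2 (mem_Icc.2 ⟨Int.ediv_nonneg (by linarith) hd'.le,
        Int.ediv_le_ediv hd' (by linarith)⟩)
    · intro x hx y hy hquot
      have hdvd' : (d : ℤ) ∣ x - a - (y - a) := by simpa using hdvd x hx y hy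
      have hmod : (x - a) % d = (y - a) % d := Int.emod_eq_emod_iff_emod_sub_eq_zero.2
        (Int.emod_eq_zero_of_dvd hdvd')
      have h₁ := Int.emod_add_mul_ediv (x - a) d
      have h₂ := Int.emod_add_mul_ediv (y - a) d
      simp only at hquot
      rw [hmod, hquot] at h₁
      linarith
  have hquot : 0 ≤ (b - a) / (d : ℤ) := Int.ediv_nonneg (by linarith) hd'.le
  have hsub : ((#S - 1 : ℕ) : ℤ) ≤ (b - a) / d := by
    rw [Int.card_Icc] at hcard
    omega
  have hmul : ((#S - 1 : ℕ) : ℤ) * d ≤ b - a :=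
    (mul_le_mul_of_nonneg_right hsub hd'.le).trans (Int.ediv_mul_le _ hd'.ne')
  rw [Int.card_Icc]
  zify [show 1 ≤ (b + 1 - a).toNat by omega]
  omega

lemma cross_sub_le {a b c d x₀ x₁ x₂ y₀ y₁ y₂ : ℤ}
    (hx₀ : x₀ ∈ Icc a b) (hx₁ : x₁ ∈ Icc a b) (hx₂ : x₂ ∈ Icc a b)
    (hy₀ : y₀ ∈ Icc c d) (hy₁ : y₁ ∈ Icc c d) (hy₂ : y₂ ∈ Icc c d) :
    (x₁ - x₀) * (y₂ - y₀) - (x₂ - x₀) * (y₁ - y₀) ≤ (b - a) * (d - c) := by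
  have mul_le {x : ℤ} (z : ℤ) (hx : x ∈ Icc a b) : (x - a) * z ≤ (b - a) * max z 0 := by
    obtain ⟨hax, hxb⟩ := mem_Icc.1 hx
    calc (x - a) * z ≤ (x - a) * max z 0 := by gcongr; exact le_max_left z 0
      _ ≤ (b - a) * max z 0 := by gcongr
  simp only [mem_Icc] at hy₀ hy₁ hy₂
  have hab : 0 ≤ b - a := by linarith [mem_Icc.1 hx₀]
  calc (x₁ - x₀) * (y₂ - y₀) - (x₂ - x₀) * (y₁ - y₀)
      = (x₀ - a) * (y₁ - y₂) + (x₁ - a) * (y₂ - y₀) + (x₂ - a) * (y₀ - y₁) := by ring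
    _ ≤ (b - a) * max (y₁ - y₂) 0 + (b - a) * max (y₂ - y₀) 0 + (b - a) * max (y₀ - y₁) 0 :=
        add_le_add (add_le_add (mul_le _ hx₀) (mul_le _ hx₁)) (mul_le _ hx₂)
    _ = (b - a) * (max (y₁ - y₂) 0 + max (y₂ - y₀) 0 + max (y₀ - y₁) 0) := by ring
    _ ≤ (b - a) * (d - c) := by gcongr; omega

lemma abs_cross_sub_lt {a b c d : ℤ} {P Q R : ℤ × ℤ} (hP : P ∈ Icc a b ×ˢ Icc c d)
    (hQ : Q ∈ Icc a b ×ˢ Icc c d) (hR : R ∈ Icc a b ×ˢ Icc c d) :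
    |(Q.1 - P.1) * (R.2 - P.2) - (R.1 - P.1) * (Q.2 - P.2)| < #(Icc a b) * #(Icc c d) := by
  rw [mem_product] at hP hQ hR
  have hQR := cross_sub_le hP.1 hQ.1 hR.1 hP.2 hQ.2 hR.2
  have hRQ := cross_sub_le hP.1 hR.1 hQ.1 hP.2 hR.2 hQ.2
  obtain ⟨⟨haP, hPb⟩, hcP, hPd⟩ := And.imp mem_Icc.1 mem_Icc.1 hP
  rw [Int.card_Icc_of_le _ _ (by linarith), Int.card_Icc_of_le _ _ (by linarith), abs_lt]
  constructor <;> nlinarith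

end IntegerPoints

section Lines

lemma exists_dvd_sub_of_collinear {V : Finset (ℤ × ℤ)} {P Q : ℤ × ℤ}
    (hcol : ∀ R ∈ V, (Q.1 - P.1) * (R.2 - P.2) = (R.1 - P.1) * (Q.2 - P.2)) (hPQ : P ≠ Q) :
    ∃ g u v : ℤ, Q.1 - P.1 = u * g ∧ Q.2 - P.2 = v * g ∧
      ∀ R ∈ V, ∀ T ∈ V, u ∣ R.1 - T.1 ∧ v ∣ R.2 - T.2 := by
  have hpos : 0 < Int.gcd (Q.1 - P.1) (Q.2 - P.2) := by
    rw [Nat.pos_iff_ne_zero, Ne, Int.gcd_eq_zero_iff, sub_eq_zero, sub_eq_zero]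
    exact fun h => hPQ (Prod.ext h.1.symm h.2.symm)
  obtain ⟨u, v, huv, hu, hv⟩ := Int.exists_gcd_one hpos
  generalize Int.gcd (Q.1 - P.1) (Q.2 - P.2) = g at hpos hu hv
  have hcop : IsCoprime u v := Int.isCoprime_iff_gcd_eq_one.2 huv
  refine ⟨g, u, v, hu, hv, fun R hR T hT => ?_⟩
  have hline : u * (R.2 - T.2) = v * (R.1 - T.1) := by
    have hR := hcol R hR
    have hT := hcol T hT
    rw [hu, hv] at hR hT
    exact mul_right_cancel₀ (Int.natCast_ne_zero.2 hpos.ne') (by linear_combination hR - hT)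
  exact ⟨hcop.dvd_of_dvd_mul_left (hline ▸ dvd_mul_right u _),
    hcop.symm.dvd_of_dvd_mul_left (hline ▸ dvd_mul_right v _)⟩

lemma card_sq_mul_le_of_dvd_sub {V : Finset (ℤ × ℤ)} {a b c d : ℤ} {i j : ℕ}
    (hV : V ⊆ Icc a b ×ˢ Icc c d) (hcard : 1 < #V)
    (hfst : Set.InjOn Prod.fst (V : Set (ℤ × ℤ))) (hsnd : Set.InjOn Prod.snd (V : Set (ℤ × ℤ)))
    (hdvd : ∀ P ∈ V, ∀ Q ∈ V, (i : ℤ) ∣ P.1 - Q.1 ∧ (j : ℤ) ∣ P.2 - Q.2) :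
    i ≤ #(Icc a b) ∧ j ≤ #(Icc c d) ∧
      #V ^ 2 * (i * j) ≤ 4 * (#(Icc a b) * #(Icc c d)) := by
  have hi : (#V - 1) * i ≤ #(Icc a b) - 1 := by
    rw [← card_image_of_injOn hfst]
    refine card_sub_one_mul_le_of_dvd_sub i (fun x hx => ?_) fun x hx y hy => ?_
    · obtain ⟨P, hP, rfl⟩ := mem_image.1 hx
      exact (mem_product.1 (hV hP)).1
    · obtain ⟨P, hP, rfl⟩ := mem_image.1 hx
      obtain ⟨Q, hQ, rfl⟩ := mem_image.1 hy
      exact (hdvd P hP Q hQ).1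
  have hj : (#V - 1) * j ≤ #(Icc c d) - 1 := by
    rw [← card_image_of_injOn hsnd]
    refine card_sub_one_mul_le_of_dvd_sub j (fun x hx => ?_) fun x hx y hy => ?_
    · obtain ⟨P, hP, rfl⟩ := mem_image.1 hx
      exact (mem_product.1 (hV hP)).2
    · obtain ⟨P, hP, rfl⟩ := mem_image.1 hx
      obtain ⟨Q, hQ, rfl⟩ := mem_image.1 hy
      exact (hdvd P hP Q hQ).2
  have hpos : 1 ≤ #V - 1 := by omega
  have hdouble : #V ≤ 2 * (#V - 1) := by omega
  refine ⟨by nlinarith [Nat.sub_le #(Icc a b) 1], by nlinarith [Nat.sub_le #(Icc c d) 1], ?_⟩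
  calc #V ^ 2 * (i * j) = (#V * i) * (#V * j) := by ring
    _ ≤ (2 * (#V - 1) * i) * (2 * (#V - 1) * j) := by gcongr
    _ = 4 * (((#V - 1) * i) * ((#V - 1) * j)) := by ring
    _ ≤ 4 * (#(Icc a b) * #(Icc c d)) := by
        gcongr
        · exact hi.trans (Nat.sub_le _ _)
        · exact hj.trans (Nat.sub_le _ _)

end Lines

section Ratio

variable {F : Type*} [Field F]

/-- The ratio `x / y` in the field `F` of an integer point `(x, y)`; it is `0` when `y` vanishes
in `F`. -/
def ratio (F : Type*) [Field F] (v : ℤ × ℤ) : F :=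
  v.1 / v.2

lemma intCast_ne_zero_of_mem_Icc {p : ℕ} [CharP F p] {x : ℤ} (hx : x ∈ Icc 1 ((p : ℤ) - 1)) :
    (x : F) ≠ 0 := by
  obtain ⟨hx₁, hxp⟩ := mem_Icc.1 hx
  rw [Ne, CharP.intCast_eq_zero_iff F p]
  intro hdvd
  have := Int.le_of_dvd (by linarith) hdvd
  linarith

lemma intCast_injOn_Icc {p : ℕ} [CharP F p] :
    Set.InjOn (Int.cast : ℤ → F) (Icc 1 ((p : ℤ) - 1) : Finset ℤ) := by
  refine (CharP.intCast_injOn_Ico F p).mono fun x hx => ?_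
  obtain ⟨hx₁, hxp⟩ := mem_Icc.1 hx
  exact ⟨by linarith, by linarith⟩

variable {p : ℕ} [CharP F p]

lemma intCast_fst_eq_mul_snd {v : ℤ × ℤ} {l : F} (hv : v.2 ∈ Icc 1 ((p : ℤ) - 1))
    (hl : ratio F v = l) : (v.1 : F) = l * v.2 :=
  (div_eq_iff (intCast_ne_zero_of_mem_Icc hv)).1 hl

lemma ratio_ne_zero {v : ℤ × ℤ} (hv₁ : v.1 ∈ Icc 1 ((p : ℤ) - 1))
    (hv₂ : v.2 ∈ Icc 1 ((p : ℤ) - 1)) : ratio F v ≠ 0 :=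
  div_ne_zero (intCast_ne_zero_of_mem_Icc hv₁) (intCast_ne_zero_of_mem_Icc hv₂)

variable {V : Finset (ℤ × ℤ)} {a b c d : ℤ} {l : F}

lemma injOn_snd_of_ratio_eq (hab : Icc a b ⊆ Icc 1 ((p : ℤ) - 1))
    (hcd : Icc c d ⊆ Icc 1 ((p : ℤ) - 1)) (hV : V ⊆ Icc a b ×ˢ Icc c d)
    (hl : ∀ P ∈ V, ratio F P = l) : Set.InjOn Prod.snd (V : Set (ℤ × ℤ)) := by
  intro P hP Q hQ h
  obtain ⟨hP₁, hP₂⟩ := mem_product.1 (hV hP)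
  obtain ⟨hQ₁, hQ₂⟩ := mem_product.1 (hV hQ)
  refine Prod.ext (intCast_injOn_Icc (F := F) (hab hP₁) (hab hQ₁) ?_) h
  rw [intCast_fst_eq_mul_snd (hcd hP₂) (hl P hP), intCast_fst_eq_mul_snd (hcd hQ₂) (hl Q hQ), h]

lemma injOn_fst_of_ratio_eq (hab : Icc a b ⊆ Icc 1 ((p : ℤ) - 1))
    (hcd : Icc c d ⊆ Icc 1 ((p : ℤ) - 1)) (hV : V ⊆ Icc a b ×ˢ Icc c d)
    (hl : ∀ P ∈ V, ratio F P = l) : Set.InjOn Prod.fst (V : Set (ℤ × ℤ)) := by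
  intro P hP Q hQ h
  obtain ⟨hP₁, hP₂⟩ := mem_product.1 (hV hP)
  obtain ⟨-, hQ₂⟩ := mem_product.1 (hV hQ)
  have hl₀ : l ≠ 0 := hl P hP ▸ ratio_ne_zero (hab hP₁) (hcd hP₂)
  refine Prod.ext h (intCast_injOn_Icc (F := F) (hcd hP₂) (hcd hQ₂) (mul_left_cancel₀ hl₀ ?_))
  rw [← intCast_fst_eq_mul_snd (hcd hP₂) (hl P hP), h, intCast_fst_eq_mul_snd (hcd hQ₂) (hl Q hQ)]

lemma cross_sub_eq_of_ratio_eq (hcd : Icc c d ⊆ Icc 1 ((p : ℤ) - 1))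
    (hp : #(Icc a b) * #(Icc c d) ≤ p) (hV : V ⊆ Icc a b ×ˢ Icc c d) (hl : ∀ P ∈ V, ratio F P = l)
    {P Q R : ℤ × ℤ} (hP : P ∈ V) (hQ : Q ∈ V) (hR : R ∈ V) :
    (Q.1 - P.1) * (R.2 - P.2) = (R.1 - P.1) * (Q.2 - P.2) := by
  have hline {T : ℤ × ℤ} (hT : T ∈ V) : (T.1 : F) = l * T.2 :=
    intCast_fst_eq_mul_snd (hcd (mem_product.1 (hV hT)).2) (hl T hT)
  have hcast : (((Q.1 - P.1) * (R.2 - P.2) - (R.1 - P.1) * (Q.2 - P.2) : ℤ) : F) = 0 := by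
    push_cast
    rw [hline hP, hline hQ, hline hR]
    ring
  exact sub_eq_zero.1 (Int.eq_zero_of_abs_lt_dvd ((CharP.intCast_eq_zero_iff F p _).1 hcast)
    ((abs_cross_sub_lt (hV hP) (hV hQ) (hV hR)).trans_le (by exact_mod_cast hp)))

lemma exists_eq_div_and_dvd_sub (hab : Icc a b ⊆ Icc 1 ((p : ℤ) - 1))
    (hcd : Icc c d ⊆ Icc 1 ((p : ℤ) - 1)) (hp : #(Icc a b) * #(Icc c d) ≤ p)
    (hV : V ⊆ Icc a b ×ˢ Icc c d) (hl : ∀ P ∈ V, ratio F P = l) (hcard : 1 < #V) :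
    ∃ u v : ℤ, l = u / v ∧ ∀ R ∈ V, ∀ T ∈ V, u ∣ R.1 - T.1 ∧ v ∣ R.2 - T.2 := by
  obtain ⟨P, hP, Q, hQ, hPQ⟩ := one_lt_card.1 hcard
  obtain ⟨g, u, v, hu, hv, hdvd⟩ := exists_dvd_sub_of_collinear
    (fun R hR => cross_sub_eq_of_ratio_eq hcd hp hV hl hP hQ hR) hPQ
  refine ⟨u, v, ?_, hdvd⟩
  have hP₂ := hcd (mem_product.1 (hV hP)).2
  have hQ₂ := hcd (mem_product.1 (hV hQ)).2
  have hu' : (Q.1 - P.1 : F) = u * g := by exact_mod_cast congrArg (Int.cast : ℤ → F) hu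
  have hv' : (Q.2 - P.2 : F) = v * g := by exact_mod_cast congrArg (Int.cast : ℤ → F) hv
  have hgv : (v * g : F) ≠ 0 := by
    rw [← hv', sub_ne_zero]
    exact intCast_injOn_Icc.ne hQ₂ hP₂ fun h =>
      hPQ (injOn_snd_of_ratio_eq hab hcd hV hl hP hQ h.symm)
  have hline : (u : F) * g = l * (v * g) := by
    rw [← hu', ← hv', intCast_fst_eq_mul_snd hQ₂ (hl Q hQ), intCast_fst_eq_mul_snd hP₂ (hl P hP),
      mul_sub]
  obtain ⟨hv₀, hg₀⟩ := mul_ne_zero_iff.1 hgv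
  exact (eq_div_iff hv₀).2 (mul_right_cancel₀ hg₀ (by linear_combination -hline))

lemma intCast_div_eq_natAbs_div_or_neg (u v : ℤ) :
    (u / v : F) = u.natAbs / v.natAbs ∨ (u / v : F) = -(u.natAbs / v.natAbs) := by
  have hcast (z : ℤ) : (z : F) = z.natAbs ∨ (z : F) = -z.natAbs := by
    rw [← Int.cast_natCast (R := F), ← Int.cast_neg]
    exact (Int.natAbs_eq z).imp (congrArg Int.cast) (congrArg Int.cast)
  rcases hcast u with hu | hu <;> rcases hcast v with hv | hv <;>
    simp only [hu, hv, neg_div, div_neg, neg_neg, true_or, or_true]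

lemma exists_eq_div_or_neg_and_card_sq_mul_le (hab : Icc a b ⊆ Icc 1 ((p : ℤ) - 1))
    (hcd : Icc c d ⊆ Icc 1 ((p : ℤ) - 1)) (hp : #(Icc a b) * #(Icc c d) ≤ p)
    (hV : V ⊆ Icc a b ×ˢ Icc c d) (hl : ∀ P ∈ V, ratio F P = l) (hcard : 1 < #V) :
    ∃ e ∈ Icc 1 #(Icc a b) ×ˢ Icc 1 #(Icc c d), (l = e.1 / e.2 ∨ l = -(e.1 / e.2)) ∧
      #V ^ 2 * (e.1 * e.2) ≤ 4 * (#(Icc a b) * #(Icc c d)) := by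
  obtain ⟨u, v, rfl, hdvd⟩ := exists_eq_div_and_dvd_sub hab hcd hp hV hl hcard
  obtain ⟨hi, hj, hmul⟩ := card_sq_mul_le_of_dvd_sub hV hcard
    (injOn_fst_of_ratio_eq hab hcd hV hl) (injOn_snd_of_ratio_eq hab hcd hV hl)
    fun R hR T hT => ⟨Int.natAbs_dvd.2 (hdvd R hR T hT).1, Int.natAbs_dvd.2 (hdvd R hR T hT).2⟩
  have hne : (u / v : F) ≠ 0 := by
    obtain ⟨P, hP⟩ := card_pos.1 (one_pos.trans hcard)
    obtain ⟨hP₁, hP₂⟩ := mem_product.1 (hV hP)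
    exact hl P hP ▸ ratio_ne_zero (hab hP₁) (hcd hP₂)
  obtain ⟨hu, hv⟩ := div_ne_zero_iff.1 hne
  refine ⟨(u.natAbs, v.natAbs), ?_, intCast_div_eq_natAbs_div_or_neg u v, hmul⟩
  simp only [mem_product, mem_Icc]
  exact ⟨⟨Int.natAbs_pos.2 fun h => hu (by rw [h, Int.cast_zero]), hi⟩,
    Int.natAbs_pos.2 fun h => hv (by rw [h, Int.cast_zero]), hj⟩

end Ratio

section Energy

lemma sum_Icc_inv_le_one_add_log (n : ℕ) : ∑ i ∈ Icc 1 n, (i : ℝ)⁻¹ ≤ 1 + Real.log n := by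
  have h := harmonic_le_one_add_log n
  rw [harmonic_eq_sum_Icc] at h
  push_cast at h
  exact h

variable {F : Type*} [Field F]

lemma sum_le_of_forall_exists_eq_div_or_neg {S : Finset F} {w : F → ℝ} {m n : ℕ} {M : ℝ}
    (hM : 0 ≤ M) (h : ∀ l ∈ S, ∃ e ∈ Icc 1 m ×ˢ Icc 1 n,
      (l = e.1 / e.2 ∨ l = -(e.1 / e.2)) ∧ w l * (e.1 * e.2) ≤ M) :
    ∑ l ∈ S, w l ≤ 2 * M * ((1 + Real.log m) * (1 + Real.log n)) := by
  classical
  choose! e he hle hw using h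
  have hfibre (t : ℕ × ℕ) : #{l ∈ S | e l = t} ≤ 2 := by
    have htwo : #{(t.1 / t.2 : F), -(t.1 / t.2 : F)} ≤ 2 := card_le_two
    refine (card_le_card fun l hl => ?_).trans htwo
    obtain ⟨hlS, rfl⟩ := mem_filter.1 hl
    simpa only [mem_insert, mem_singleton] using hle l hlS
  calc ∑ l ∈ S, w l ≤ ∑ l ∈ S, M * (((e l).1 : ℝ)⁻¹ * ((e l).2 : ℝ)⁻¹) := by
        refine sum_le_sum fun l hl => ?_
        obtain ⟨h₁, h₂⟩ := And.imp mem_Icc.1 mem_Icc.1 (mem_product.1 (he l hl))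
        have : (0 : ℝ) < (e l).1 * (e l).2 := by exact_mod_cast Nat.mul_pos h₁.1 h₂.1
        rw [← mul_inv, ← div_eq_mul_inv, le_div_iff₀ this]
        exact hw l hl
    _ = ∑ t ∈ Icc 1 m ×ˢ Icc 1 n, ∑ l ∈ S with e l = t, M * ((t.1 : ℝ)⁻¹ * (t.2 : ℝ)⁻¹) :=
        (sum_fiberwise_of_maps_to' he fun t : ℕ × ℕ => M * ((t.1 : ℝ)⁻¹ * (t.2 : ℝ)⁻¹)).symm
    _ ≤ ∑ t ∈ Icc 1 m ×ˢ Icc 1 n, 2 * (M * ((t.1 : ℝ)⁻¹ * (t.2 : ℝ)⁻¹)) := by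
        refine sum_le_sum fun t _ => ?_
        rw [sum_const, nsmul_eq_mul]
        gcongr
        exact_mod_cast hfibre t
    _ = 2 * M * ((∑ i ∈ Icc 1 m, (i : ℝ)⁻¹) * ∑ j ∈ Icc 1 n, (j : ℝ)⁻¹) := by
        rw [sum_mul_sum, ← sum_product', mul_sum]
        exact sum_congr rfl fun t _ => by ring
    _ ≤ 2 * M * ((1 + Real.log m) * (1 + Real.log n)) := by
        gcongr
        · exact sum_Icc_inv_le_one_add_log m
        · exact sum_Icc_inv_le_one_add_log n

lemma log_card_Icc_le {p : ℕ} {a b : ℤ} (hab : Icc a b ⊆ Icc 1 ((p : ℤ) - 1)) :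
    Real.log #(Icc a b) ≤ Real.log p := by
  have hle : #(Icc a b) ≤ p := (card_le_card hab).trans (by rw [Int.card_Icc]; omega)
  rcases Nat.eq_zero_or_pos #(Icc a b) with h | h
  · rw [h, Nat.cast_zero, Real.log_zero]
    exact Real.log_natCast_nonneg p
  · gcongr

lemma card_collisions_ratio_le [DecidableEq F] {p : ℕ} [CharP F p] {a b c d : ℤ}
    (hab : Icc a b ⊆ Icc 1 ((p : ℤ) - 1)) (hcd : Icc c d ⊆ Icc 1 ((p : ℤ) - 1))
    (hp : #(Icc a b) * #(Icc c d) ≤ p) :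
    (#(collisions (ratio F) (Icc a b ×ˢ Icc c d) (Icc a b ×ˢ Icc c d)) : ℝ) ≤
      #(Icc a b) * #(Icc c d) * (1 + 8 * (1 + Real.log p) ^ 2) := by
  set U := Icc a b ×ˢ Icc c d with hU
  have hmem : ∀ v ∈ U, ratio F v ∈ U.image (ratio F) := fun v hv => mem_image_of_mem _ hv
  set r : F → ℕ := fun l => #{v ∈ U | ratio F v = l} with hr
  have hsingle : ∑ l ∈ U.image (ratio F), (r l : ℝ) = #(Icc a b) * #(Icc c d) := by
    rw [← Nat.cast_sum, ← card_eq_sum_card_fiberwise hmem, hU, card_product, Nat.cast_mul]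
  have hmulti : ∑ l ∈ U.image (ratio F) with 1 < r l, (r l : ℝ) ^ 2 ≤
      2 * (4 * (#(Icc a b) * #(Icc c d))) *
        ((1 + Real.log #(Icc a b)) * (1 + Real.log #(Icc c d))) := by
    refine sum_le_of_forall_exists_eq_div_or_neg (by positivity) fun l hl => ?_
    obtain ⟨e, he, hle, hcard⟩ := exists_eq_div_or_neg_and_card_sq_mul_le hab hcd hp
      (filter_subset _ U) (fun P hP => (mem_filter.1 hP).2) (mem_filter.1 hl).2
    exact ⟨e, he, hle, by exact_mod_cast hcard⟩
  rw [card_collisions_eq_sum U hmem]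
  calc ((∑ l ∈ U.image (ratio F), r l * r l : ℕ) : ℝ)
      ≤ ∑ l ∈ U.image (ratio F), ((r l : ℝ) + if 1 < r l then (r l : ℝ) ^ 2 else 0) := by
        rw [Nat.cast_sum]
        refine sum_le_sum fun l _ => ?_
        split_ifs with h
        · push_cast
          nlinarith
        · exact_mod_cast (by nlinarith [not_lt.1 h] : r l * r l ≤ r l + 0)
    _ ≤ #(Icc a b) * #(Icc c d) + 2 * (4 * (#(Icc a b) * #(Icc c d))) *
          ((1 + Real.log #(Icc a b)) * (1 + Real.log #(Icc c d))) := by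
        rw [sum_add_distrib, ← sum_filter, hsingle]
        gcongr
    _ ≤ #(Icc a b) * #(Icc c d) + 2 * (4 * (#(Icc a b) * #(Icc c d))) *
          ((1 + Real.log p) * (1 + Real.log p)) := by
        have := log_card_Icc_le hab
        have := log_card_Icc_le hcd
        gcongr
    _ = #(Icc a b) * #(Icc c d) * (1 + 8 * (1 + Real.log p) ^ 2) := by ring

end Energy

section Tuples

variable {F : Type*} [Field F]

/-- The product of the elements of `R`, `T` and `S` with coefficient tuple `(x, y, x₀, y₀, s)`, its
coordinates indexed by the points `μ i`. The multiplicative energy `E(R, T, S)` is the number of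
collisions of this map. -/
def energyProduct (μ : Fin 3 → F) : ℤ × ℤ × ℤ × ℤ × ℤ → Fin 3 → F
  | (x, y, x₀, y₀, s), i => s * (x - μ i * y) * (x₀ - μ i * y₀)

/-- The integer points `(x, y)` and `(x₀, y₀)` underlying a coefficient tuple `(x, y, x₀, y₀, s)`;
forgetting the scalar `s` is the first step in counting tuples. -/
def pointPair : ℤ × ℤ × ℤ × ℤ × ℤ → (ℤ × ℤ) × (ℤ × ℤ)
  | (x, y, x₀, y₀, _) => ((x, y), (x₀, y₀))

lemma eq_and_sym2_ratio_eq_of_energyProduct_eq {p : ℕ} [CharP F p] {μ : Fin 3 → F}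
    (hμ : Function.Injective μ) {x y x₀ y₀ s x' y' x₀' y₀' s' : ℤ} (hs : (s : F) ≠ 0)
    (hy : y ∈ Icc 1 ((p : ℤ) - 1)) (hy₀ : y₀ ∈ Icc 1 ((p : ℤ) - 1))
    (hy' : y' ∈ Icc 1 ((p : ℤ) - 1)) (hy₀' : y₀' ∈ Icc 1 ((p : ℤ) - 1))
    (h : energyProduct μ (x, y, x₀, y₀, s) = energyProduct μ (x', y', x₀', y₀', s')) :
    (s : F) * (y * y₀) = s' * (y' * y₀') ∧
      s(ratio F (x, y), ratio F (x₀, y₀)) = s(ratio F (x', y'), ratio F (x₀', y₀')) :=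
  eq_and_sym2_div_eq_of_eq_on_three_points hμ hs (intCast_ne_zero_of_mem_Icc hy)
    (intCast_ne_zero_of_mem_Icc hy₀) (intCast_ne_zero_of_mem_Icc hy')
    (intCast_ne_zero_of_mem_Icc hy₀') fun i => congrFun h i

variable [DecidableEq F]

/-- The coefficient tuples `(x, y, x₀, y₀, s)` with entries in the given sets whose scalar `s` does
not vanish in `F`. -/
def coefficientTuples (F : Type*) [Field F] [DecidableEq F] (I J I₀ J₀ K : Finset ℤ) :
    Finset (ℤ × ℤ × ℤ × ℤ × ℤ) :=
  {q ∈ I ×ˢ J ×ˢ I₀ ×ˢ J₀ ×ˢ K | (q.2.2.2.2 : F) ≠ 0}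

lemma card_mul_eq_mul_le {p : ℕ} [CharP F p] (hp : 0 < p) {a b : ℤ} {α β : F} (hα : α ≠ 0) :
    #{t ∈ Icc a b ×ˢ Icc a b | (t.1 : F) * α = t.2 * β} ≤ (#(Icc a b) / p + 1) * #(Icc a b) := by
  refine card_le_mul_card_image_of_maps_to (f := Prod.snd)
    (fun t ht => (mem_product.1 (mem_filter.1 ht).1).2) _ fun s' _ => ?_
  set S := {t ∈ {t ∈ Icc a b ×ˢ Icc a b | (t.1 : F) * α = t.2 * β} | t.2 = s'} with hS
  have hS_mem {t : ℤ × ℤ} (ht : t ∈ S) : (t.1 ∈ Icc a b ∧ (t.1 : F) * α = s' * β) ∧ t.2 = s' := by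
    simp only [hS, mem_filter, mem_product] at ht
    grind
  have hfst : Set.InjOn Prod.fst (S : Set (ℤ × ℤ)) :=
    fun t ht u hu h => Prod.ext h ((hS_mem ht).2.trans (hS_mem hu).2.symm)
  have hle : (#S - 1) * p ≤ #(Icc a b) - 1 := by
    rw [← card_image_of_injOn hfst]
    refine card_sub_one_mul_le_of_dvd_sub p (fun x hx => ?_) fun x hx y hy => ?_
    · obtain ⟨t, ht, rfl⟩ := mem_image.1 hx
      exact (hS_mem ht).1.1
    · obtain ⟨t, ht, rfl⟩ := mem_image.1 hx
      obtain ⟨u, hu, rfl⟩ := mem_image.1 hy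
      rw [← CharP.intCast_eq_zero_iff F p, Int.cast_sub, sub_eq_zero]
      exact mul_right_cancel₀ hα ((hS_mem ht).1.2.trans (hS_mem hu).1.2.symm)
  have := (Nat.le_div_iff_mul_le hp).2 (hle.trans (Nat.sub_le _ _))
  omega

lemma card_collisions_energyProduct_fibre_le {p : ℕ} [CharP F p] (hp : 0 < p) {μ : Fin 3 → F}
    (hμ : Function.Injective μ) {I J I₀ J₀ : Finset ℤ} {a b : ℤ}
    (hJ : J ⊆ Icc 1 ((p : ℤ) - 1)) (hJ₀ : J₀ ⊆ Icc 1 ((p : ℤ) - 1))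
    {v : ((ℤ × ℤ) × (ℤ × ℤ)) × ((ℤ × ℤ) × (ℤ × ℤ))}
    (hv : v ∈ ((I ×ˢ J) ×ˢ (I₀ ×ˢ J₀)) ×ˢ ((I ×ˢ J) ×ˢ (I₀ ×ˢ J₀))) :
    #{q ∈ collisions (energyProduct μ) (coefficientTuples F I J I₀ J₀ (Icc a b))
        (coefficientTuples F I J I₀ J₀ (Icc a b)) | Prod.map pointPair pointPair q = v} ≤
      (#(Icc a b) / p + 1) * #(Icc a b) := by
  obtain ⟨⟨⟨x, y⟩, x₀, y₀⟩, ⟨x', y'⟩, x₀', y₀'⟩ := v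
  simp only [mem_product] at hv
  obtain ⟨⟨⟨-, hy⟩, -, hy₀⟩, ⟨-, hy'⟩, -, hy₀'⟩ := hv
  have hα : (y * y₀ : F) ≠ 0 :=
    mul_ne_zero (intCast_ne_zero_of_mem_Icc (hJ hy)) (intCast_ne_zero_of_mem_Icc (hJ₀ hy₀))
  refine le_trans ?_ (card_mul_eq_mul_le (β := (y' * y₀' : F)) hp hα)
  apply card_le_card_of_injOn fun q => (q.1.2.2.2.2, q.2.2.2.2.2)
  · rintro ⟨⟨x, y, x₀, y₀, s⟩, x', y', x₀', y₀', s'⟩ hq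
    simp only [coe_filter, Set.mem_ofPred_eq, mem_collisions, coefficientTuples, mem_filter,
      mem_product, Prod.map_apply, pointPair, Prod.mk.injEq] at hq
    obtain ⟨⟨⟨⟨⟨-, -, -, -, hK⟩, hs⟩, ⟨-, -, -, -, hK'⟩, -⟩, h⟩, ⟨⟨rfl, rfl⟩, rfl, rfl⟩,
      ⟨rfl, rfl⟩, rfl, rfl⟩ := hq
    refine mem_coe.2 (mem_filter.2 ⟨mem_product.2 ⟨hK, hK'⟩, ?_⟩)
    exact (eq_and_sym2_ratio_eq_of_energyProduct_eq hμ hs (hJ hy) (hJ₀ hy₀) (hJ hy')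
      (hJ₀ hy₀') h).1
  · rintro ⟨⟨x, y, x₀, y₀, s⟩, x', y', x₀', y₀', s'⟩ hq
      ⟨⟨w, z, w₀, z₀, t⟩, w', z', w₀', z₀', t'⟩ hr h
    simp only [coe_filter, Set.mem_ofPred_eq, Prod.map_apply, pointPair, Prod.mk.injEq]
      at hq hr h ⊢
    grind

lemma card_collisions_energyProduct_le {p : ℕ} [CharP F p] (hp : 0 < p) {μ : Fin 3 → F}
    (hμ : Function.Injective μ) (I I₀ : Finset ℤ) {J J₀ : Finset ℤ} {a b : ℤ}
    (hJ : J ⊆ Icc 1 ((p : ℤ) - 1)) (hJ₀ : J₀ ⊆ Icc 1 ((p : ℤ) - 1)) :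
    #(collisions (energyProduct μ) (coefficientTuples F I J I₀ J₀ (Icc a b))
        (coefficientTuples F I J I₀ J₀ (Icc a b))) ≤
      (#(Icc a b) / p + 1) * #(Icc a b) *
        #(collisions (fun v => s(ratio F v.1, ratio F v.2))
          ((I ×ˢ J) ×ˢ (I₀ ×ˢ J₀)) ((I ×ˢ J) ×ˢ (I₀ ×ˢ J₀))) := by
  refine card_le_mul_card_image_of_maps_to (f := Prod.map pointPair pointPair) ?_ _ fun v hv =>
    card_collisions_energyProduct_fibre_le hp hμ hJ hJ₀ (mem_filter.1 hv).1
  rintro ⟨⟨x, y, x₀, y₀, s⟩, x', y', x₀', y₀', s'⟩ hq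
  simp only [mem_collisions, coefficientTuples, mem_filter, mem_product, Prod.map_apply,
    pointPair] at hq ⊢
  obtain ⟨⟨⟨⟨hx, hy, hx₀, hy₀, -⟩, hs⟩, ⟨hx', hy', hx₀', hy₀', -⟩, -⟩, h⟩ := hq
  exact ⟨⟨⟨⟨hx, hy⟩, hx₀, hy₀⟩, ⟨hx', hy'⟩, hx₀', hy₀'⟩,
    (eq_and_sym2_ratio_eq_of_energyProduct_eq hμ hs (hJ hy) (hJ₀ hy₀) (hJ hy') (hJ₀ hy₀') h).2⟩

end Tuples

section Bounds

lemma card_collisions_energyProduct_le_log {F : Type*} [Field F] [DecidableEq F] {p : ℕ} [CharP F p]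
    (hp : 0 < p) {μ : Fin 3 → F} (hμ : Function.Injective μ) {a₁ b₁ a₂ b₂ a₀ b₀ a b : ℤ}
    (hI : Icc a₁ b₁ ⊆ Icc 1 ((p : ℤ) - 1)) (hJ : Icc a₂ b₂ ⊆ Icc 1 ((p : ℤ) - 1))
    (hI₀ : Icc a₀ b₀ ⊆ Icc 1 ((p : ℤ) - 1)) (hIJ : #(Icc a₁ b₁) * #(Icc a₂ b₂) ≤ p)
    (hI₀I₀ : #(Icc a₀ b₀) * #(Icc a₀ b₀) ≤ p) :
    (#(collisions (energyProduct μ)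
        (coefficientTuples F (Icc a₁ b₁) (Icc a₂ b₂) (Icc a₀ b₀) (Icc a₀ b₀) (Icc a b))
        (coefficientTuples F (Icc a₁ b₁) (Icc a₂ b₂) (Icc a₀ b₀) (Icc a₀ b₀) (Icc a b))) : ℝ) ≤
      2 * (#(Icc a₁ b₁) * #(Icc a₂ b₂)) * #(Icc a₀ b₀) ^ 2 * (1 + 8 * (1 + Real.log p) ^ 2) ^ 2 *
        ((#(Icc a b) / p + 1) * #(Icc a b)) := by
  set e₁ := #(collisions (ratio F) (Icc a₁ b₁ ×ˢ Icc a₂ b₂) (Icc a₁ b₁ ×ˢ Icc a₂ b₂))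
  set e₀ := #(collisions (ratio F) (Icc a₀ b₀ ×ˢ Icc a₀ b₀) (Icc a₀ b₀ ×ˢ Icc a₀ b₀))
  have hcount := (card_collisions_energyProduct_le (a := a) (b := b) hp hμ (Icc a₁ b₁) (Icc a₀ b₀)
    hJ hI₀).trans (Nat.mul_le_mul_left _ (card_collisions_sym2_le (ratio F) _ _))
  calc _ ≤ (((#(Icc a b) / p + 1) * #(Icc a b) * (2 * (e₁ * e₀)) : ℕ) : ℝ) := by
        exact_mod_cast hcount
    _ ≤ (#(Icc a b) / p + 1) * #(Icc a b) * (2 * (e₁ * e₀)) := by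
        push_cast
        gcongr
        exact Nat.cast_div_le
    _ ≤ (#(Icc a b) / p + 1) * #(Icc a b) *
          (2 * ((#(Icc a₁ b₁) * #(Icc a₂ b₂) * (1 + 8 * (1 + Real.log p) ^ 2)) *
            (#(Icc a₀ b₀) * #(Icc a₀ b₀) * (1 + 8 * (1 + Real.log p) ^ 2)))) := by
        gcongr
        · exact card_collisions_ratio_le hI hJ hIJ
        · exact card_collisions_ratio_le hI₀ hI₀ hI₀I₀
    _ = _ := by ring

lemma eventually_log_factor_sq_le_rpow {ε : ℝ} (hε : 0 < ε) :
    ∀ᶠ x : ℝ in Filter.atTop, (1 + 8 * (1 + Real.log x) ^ 2) ^ 2 ≤ x ^ ε := by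
  have hε₄ : 0 < ε / 4 := by positivity
  have hone : (fun _ => (1 : ℝ)) =o[Filter.atTop] fun x : ℝ => x ^ (ε / 4) :=
    (Asymptotics.isLittleO_one_left_iff ℝ).2
      (tendsto_norm_atTop_atTop.comp (tendsto_rpow_atTop hε₄))
  have hlog : (fun x => 1 + Real.log x) =o[Filter.atTop] fun x : ℝ => x ^ (ε / 4) :=
    hone.add (isLittleO_log_rpow_atTop hε₄)
  filter_upwards [hlog.def (by norm_num : (0 : ℝ) < 1 / 3), Filter.eventually_ge_atTop 1]
    with x hx hx₁
  have hlog₀ : 0 ≤ Real.log x := Real.log_nonneg hx₁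
  rw [Real.norm_of_nonneg (by positivity), Real.norm_of_nonneg (by positivity)] at hx
  calc (1 + 8 * (1 + Real.log x) ^ 2) ^ 2 ≤ ((3 * (1 + Real.log x)) ^ 2) ^ 2 := by
        gcongr
        nlinarith
    _ ≤ ((x ^ (ε / 4)) ^ 2) ^ 2 := by
        gcongr
        linarith
    _ = x ^ ε := by
        rw [← pow_mul, ← Real.rpow_mul_natCast (by positivity)]
        norm_num

lemma div_add_one_mul_le_rpow {P κ δ : ℝ} (hP : 1 ≤ P) (hδ : 0 ≤ δ) (hδ₁ : δ ≤ 1) (hκ₀ : 0 ≤ κ)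
    (hκ : κ ≤ P ^ (3 / 2 * δ)) : (κ / P + 1) * κ ≤ 2 * P ^ (2 * δ) := by
  have hP₀ : 0 < P := by linarith
  have hquot : κ / P ≤ P ^ (δ / 2) := by
    rw [div_le_iff₀ hP₀, ← Real.rpow_add_one hP₀.ne']
    exact hκ.trans (Real.rpow_le_rpow_of_exponent_le hP (by linarith))
  have hone : 1 ≤ P ^ (δ / 2) := Real.one_le_rpow hP (by positivity)
  calc (κ / P + 1) * κ ≤ (P ^ (δ / 2) + P ^ (δ / 2)) * P ^ (3 / 2 * δ) := by gcongr
    _ = 2 * (P ^ (δ / 2) * P ^ (3 / 2 * δ)) := by ring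
    _ = 2 * P ^ (2 * δ) := by
        rw [← Real.rpow_add hP₀]
        ring_nf

lemma mul_rpow_le_mul_rpow_two_sub {P N δ : ℝ} (hP : 0 < P) (hδ₁ : δ ≤ 1)
    (hN : P ^ (3 / 4 : ℝ) ≤ N) :
    N * P ^ (3 / 4 + 9 / 4 * δ) ≤ P ^ (3 * δ) * N ^ (2 - δ) := by
  have hN₀ : 0 < N := (Real.rpow_pos_of_pos hP _).trans_le hN
  calc N * P ^ (3 / 4 + 9 / 4 * δ) = P ^ (3 * δ) * ((P ^ (3 / 4 : ℝ)) ^ (1 - δ) * N) := by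
        rw [← Real.rpow_mul hP.le, ← mul_assoc, ← Real.rpow_add hP]
        ring_nf
    _ ≤ P ^ (3 * δ) * (N ^ (1 - δ) * N) := by
        gcongr
    _ = P ^ (3 * δ) * N ^ (2 - δ) := by
        rw [← Real.rpow_add_one hN₀.ne']
        ring_nf

lemma energy_bound_le_rpow {P N h L κ δ : ℝ} (hP : 1 ≤ P) (hδ : 0 ≤ δ) (hδ₁ : δ ≤ 1)
    (hN : P ^ (3 / 4 : ℝ) ≤ N) (hh₀ : 0 ≤ h) (hh : h ≤ P ^ (3 / 8 : ℝ) / 4)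
    (hL : L ^ 2 ≤ P ^ (δ / 4)) (hκ₀ : 0 ≤ κ) (hκ : κ ≤ P ^ (3 / 2 * δ)) :
    2 * N * h ^ 2 * L ^ 2 * ((κ / P + 1) * κ) ≤ P ^ (3 * δ) * N ^ (2 - δ) := by
  have hP₀ : 0 < P := by linarith
  have hN₀ : 0 ≤ N := (Real.rpow_nonneg hP₀.le _).trans hN
  calc 2 * N * h ^ 2 * L ^ 2 * ((κ / P + 1) * κ)
      ≤ 2 * N * (P ^ (3 / 8 : ℝ) / 4) ^ 2 * P ^ (δ / 4) * (2 * P ^ (2 * δ)) := by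
        have := div_add_one_mul_le_rpow hP hδ hδ₁ hκ₀ hκ
        gcongr
    _ = 1 / 4 * (N * (P ^ (3 / 8 : ℝ) * P ^ (3 / 8 : ℝ) * P ^ (δ / 4) * P ^ (2 * δ))) := by ring
    _ = 1 / 4 * (N * P ^ (3 / 4 + 9 / 4 * δ)) := by
        simp only [← Real.rpow_add hP₀]
        ring_nf
    _ ≤ N * P ^ (3 / 4 + 9 / 4 * δ) := mul_le_of_le_one_left (by positivity) (by norm_num)
    _ ≤ P ^ (3 * δ) * N ^ (2 - δ) := mul_rpow_le_mul_rpow_two_sub hP₀ hδ₁ hN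

end Bounds

section MainTheorem

lemma Icc_one_floor_subset {p : ℕ} {x : ℝ} (hx : x < p) :
    Icc 1 ⌊x⌋ ⊆ Icc 1 ((p : ℤ) - 1) :=
  Icc_subset_Icc_right (Int.le_sub_one_of_lt (Int.floor_lt.2 (by exact_mod_cast hx)))

lemma card_Icc_one_floor_le {x : ℝ} (hx : 0 ≤ x) : (#(Icc 1 ⌊x⌋) : ℝ) ≤ x := by
  rw [Int.card_Icc, add_sub_cancel_right]
  have : ((⌊x⌋.toNat : ℤ) : ℝ) ≤ x := by
    rw [Int.toNat_of_nonneg (Int.floor_nonneg.2 hx)]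
    exact Int.floor_le x
  exact_mod_cast this

lemma natCard_subtype_le_card {α : Type*} {P : α → Prop} {s : Finset α} (h : ∀ a, P a → a ∈ s) :
    Nat.card {a // P a} ≤ #s :=
  (Nat.card_mono s.finite_toSet h).trans_eq (Nat.card_eq_finsetCard s)

lemma injective_algebraMap_roots_of_irreducible {k E : Type*} [Field k] [Field E] [Algebra k E]
    {b c : k} (hirr : Irreducible (X ^ 2 + C b * X + C c)) (a : k) {r t : E}
    (hr : r ^ 2 + algebraMap k E b * r + algebraMap k E c = 0)
    (ht : t ^ 2 + algebraMap k E b * t + algebraMap k E c = 0) (hrt : r ≠ t) :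
    Function.Injective ![algebraMap k E a, r, t] := by
  have hne {w : E} (hw : w ^ 2 + algebraMap k E b * w + algebraMap k E c = 0) :
      algebraMap k E a ≠ w := by
    rintro rfl
    refine hirr.not_isRoot_of_natDegree_ne_one (x := a) ?_ ?_
    · have : (X ^ 2 + C b * X + C c).natDegree = 2 := by compute_degree!
      omega
    · apply (algebraMap k E).injective
      simpa using hw
  intro i j hij
  fin_cases i <;> fin_cases j <;> simp_all [eq_comm]

lemma one_le_exp_log_div_log_log {x : ℝ} (hx : Real.exp 1 ≤ x) :
    1 ≤ Real.exp (Real.log x / Real.log (Real.log x)) := by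
  have hlog : 1 ≤ Real.log x := (Real.le_log_iff_exp_le ((Real.exp_pos 1).trans_le hx)).2 hx
  exact Real.one_le_exp (div_nonneg (by linarith) (Real.log_nonneg hlog))

lemma rpow_le_mul_of_add_eq {x r s t a b : ℝ} (hx : 0 < x) (hrs : r + s = t) (ha : x ^ r ≤ a)
    (hb : x ^ s ≤ b) : x ^ t ≤ a * b := by
  rw [← hrs, Real.rpow_add hx]
  exact mul_le_mul ha hb (by positivity) ((Real.rpow_nonneg hx.le r).trans ha)

lemma mul_le_of_le_rpow {x r s a b : ℝ} (hx : 1 ≤ x) (hrs : r + s ≤ 1) (hb₀ : 0 ≤ b)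
    (ha : a ≤ x ^ r) (hb : b ≤ x ^ s) : a * b ≤ x :=
  calc a * b ≤ x ^ r * x ^ s := mul_le_mul ha hb hb₀ (by positivity)
    _ = x ^ (r + s) := (Real.rpow_add (by positivity) r s).symm
    _ ≤ x := Real.rpow_le_self_of_one_le hx hrs

lemma energyProduct_algebraMap_eq {k E : Type*} [Field k] [Field E] [Algebra k E] {a : k} {r t : E}
    {x y x₀ y₀ s x' y' x₀' y₀' s' : ℤ}
    (ha : (s : k) * (x - a * y) * (x₀ - a * y₀) = s' * (x' - a * y') * (x₀' - a * y₀'))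
    (hr : (s : E) * (x - r * y) * (x₀ - r * y₀) = s' * (x' - r * y') * (x₀' - r * y₀'))
    (ht : (s : E) * (x - t * y) * (x₀ - t * y₀) = s' * (x' - t * y') * (x₀' - t * y₀')) :
    energyProduct ![algebraMap k E a, r, t] (x, y, x₀, y₀, s) =
      energyProduct ![algebraMap k E a, r, t] (x', y', x₀', y₀', s') := by
  have ha' := congrArg (algebraMap k E) ha
  simp only [map_mul, map_sub, map_intCast] at ha'
  funext i
  fin_cases i
  exacts [ha', hr, ht]

theorem stmt11_general {k : ℝ} (hk : 1 ≤ k) :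
    ∃ p₀ : ℕ, ∀ p : ℕ, p₀ < p → ∀ (F : Type*) [Field F] [DecidableEq F] [CharP F p]
      (μ : Fin 3 → F), Function.Injective μ →
      ∀ a₁ b₁ a₂ b₂ : ℤ,
        Icc a₁ b₁ ⊆ Icc 1 ((p : ℤ) - 1) →
        Icc a₂ b₂ ⊆ Icc 1 ((p : ℤ) - 1) →
        (p : ℝ) ^ (3 / 4 : ℝ) ≤ #(Icc a₁ b₁) * #(Icc a₂ b₂) →
        #(Icc a₁ b₁) * #(Icc a₂ b₂) ≤ p →
        let I₀ := Icc 1 ⌊(p : ℝ) ^ (3 / 8 : ℝ) / 4⌋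
        let T := coefficientTuples F (Icc a₁ b₁) (Icc a₂ b₂) I₀ I₀ (Icc 1 ⌊(p : ℝ) ^ (3 / (2 * k))⌋)
        (#(collisions (energyProduct μ) T T) : ℝ) ≤
          (p : ℝ) ^ (3 / k) * (#(Icc a₁ b₁) * #(Icc a₂ b₂) : ℝ) ^ (2 - 1 / k) := by
  have hk₀ : 0 < k := by linarith
  obtain ⟨p₀, hp₀⟩ := Filter.eventually_atTop.1 <| tendsto_natCast_atTop_atTop.eventually
    (eventually_log_factor_sq_le_rpow (by positivity : 0 < 1 / k / 4))
  refine ⟨p₀, fun p hp F _ _ _ μ hμ a₁ b₁ a₂ b₂ hI hJ hN hNp => ?_⟩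
  have hp_pos : 0 < p := by omega
  have hp₁ : (1 : ℝ) ≤ p := by exact_mod_cast hp_pos
  have hh : (#(Icc 1 ⌊(p : ℝ) ^ (3 / 8 : ℝ) / 4⌋) : ℝ) ≤ (p : ℝ) ^ (3 / 8 : ℝ) / 4 :=
    card_Icc_one_floor_le (by positivity)
  have hquarter : (p : ℝ) ^ (3 / 8 : ℝ) / 4 < (p : ℝ) ^ (3 / 8 : ℝ) :=
    div_lt_self (by positivity) (by norm_num)
  have hhp : (p : ℝ) ^ (3 / 8 : ℝ) / 4 < p :=
    hquarter.trans_le (Real.rpow_le_self_of_one_le hp₁ (by norm_num))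
  have hhh : #(Icc 1 ⌊(p : ℝ) ^ (3 / 8 : ℝ) / 4⌋) * #(Icc 1 ⌊(p : ℝ) ^ (3 / 8 : ℝ) / 4⌋) ≤ p := by
    have := hh.trans hquarter.le
    exact_mod_cast mul_le_of_le_rpow hp₁ (by norm_num) (by positivity) this this
  refine (card_collisions_energyProduct_le_log hp_pos hμ hI hJ (Icc_one_floor_subset hhp)
    hNp hhh).trans ?_
  have hκ := card_Icc_one_floor_le (by positivity : 0 ≤ (p : ℝ) ^ (3 / (2 * k)))
  rw [show 3 / (2 * k) = 3 / 2 * (1 / k) by ring] at hκ ⊢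
  rw [show 3 / k = 3 * (1 / k) by ring]
  exact energy_bound_le_rpow hp₁ (by positivity) ((div_le_one hk₀).2 hk) hN (by positivity) hh
    (hp₀ p hp.le) (by positivity) hκ

/-- the energy `E(R, T, S)` bound: the number of 10-tuples
`(x, y, x₀, y₀, s, x', y', x₀', y₀', s')` with `x, x' ∈ I`, `y, y' ∈ J`,
`x₀, y₀, x₀', y₀' ∈ I₀ = [1, p^{3/8}/4]`, `s, s' ∈ K = [1, p^{3/(2k)}]` and
`s(x − μy)(x₀ − μy₀) = s'(x' − μy')(x₀' − μy₀')` for `μ ∈ {λ₁, ω₂, ω₃}`,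
all factors nonzero, is at most
`exp(c log p / log log p) · p^{3/k} · (|I||J|)^{2 − 1/k}`. -/
theorem stmt11 (k : ℕ) (hk : 1 ≤ k) :
    ∃ c : ℝ, 0 < c ∧ ∃ p₀ : ℕ, ∀ (p : ℕ) [Fact p.Prime], p₀ < p →
      ∀ (E : Type) [Field E] [Fintype E] [Algebra (ZMod p) E], Fintype.card E = p ^ 2 →
      ∀ (lam₁ lam₂ lam₃ : ZMod p) (ω₂ ω₃ : E),
        Irreducible (X ^ 2 + C lam₂ * X + C lam₃ : Polynomial (ZMod p)) →
        ω₂ ^ 2 + algebraMap (ZMod p) E lam₂ * ω₂ + algebraMap (ZMod p) E lam₃ = 0 →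
        ω₃ ^ 2 + algebraMap (ZMod p) E lam₂ * ω₃ + algebraMap (ZMod p) E lam₃ = 0 →
        ω₂ ≠ ω₃ →
      ∀ a₁ b₁ a₂ b₂ : ℤ,
        Finset.Icc a₁ b₁ ⊆ Finset.Icc 1 ((p : ℤ) - 1) →
        Finset.Icc a₂ b₂ ⊆ Finset.Icc 1 ((p : ℤ) - 1) →
        (p : ℝ) ^ ((3 : ℝ) / 8) ≤ ((Finset.Icc a₁ b₁).card : ℝ) →
        ((Finset.Icc a₁ b₁).card : ℝ) < (p : ℝ) ^ ((1 : ℝ) / 2) →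
        (p : ℝ) ^ ((3 : ℝ) / 8) ≤ ((Finset.Icc a₂ b₂).card : ℝ) →
        ((Finset.Icc a₂ b₂).card : ℝ) < (p : ℝ) ^ ((1 : ℝ) / 2) →
        (Nat.card {q : (ℤ × ℤ × ℤ × ℤ × ℤ) × (ℤ × ℤ × ℤ × ℤ × ℤ) //
            q.1.1 ∈ Finset.Icc a₁ b₁ ∧ q.1.2.1 ∈ Finset.Icc a₂ b₂ ∧
            q.1.2.2.1 ∈ Finset.Icc (1 : ℤ) ⌊(p : ℝ) ^ ((3 : ℝ) / 8) / 4⌋ ∧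
            q.1.2.2.2.1 ∈ Finset.Icc (1 : ℤ) ⌊(p : ℝ) ^ ((3 : ℝ) / 8) / 4⌋ ∧
            q.1.2.2.2.2 ∈ Finset.Icc (1 : ℤ) ⌊(p : ℝ) ^ ((3 : ℝ) / (2 * (k : ℝ)))⌋ ∧
            q.2.1 ∈ Finset.Icc a₁ b₁ ∧ q.2.2.1 ∈ Finset.Icc a₂ b₂ ∧
            q.2.2.2.1 ∈ Finset.Icc (1 : ℤ) ⌊(p : ℝ) ^ ((3 : ℝ) / 8) / 4⌋ ∧
            q.2.2.2.2.1 ∈ Finset.Icc (1 : ℤ) ⌊(p : ℝ) ^ ((3 : ℝ) / 8) / 4⌋ ∧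
            q.2.2.2.2.2 ∈ Finset.Icc (1 : ℤ) ⌊(p : ℝ) ^ ((3 : ℝ) / (2 * (k : ℝ)))⌋ ∧
            (q.1.2.2.2.2 : ZMod p) ≠ 0 ∧ (q.2.2.2.2.2 : ZMod p) ≠ 0 ∧
            -- μ = λ₁, in F_p
            (q.1.2.2.2.2 : ZMod p) * ((q.1.1 : ZMod p) - lam₁ * (q.1.2.1 : ZMod p)) *
                ((q.1.2.2.1 : ZMod p) - lam₁ * (q.1.2.2.2.1 : ZMod p)) =
              (q.2.2.2.2.2 : ZMod p) * ((q.2.1 : ZMod p) - lam₁ * (q.2.2.1 : ZMod p)) *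
                ((q.2.2.2.1 : ZMod p) - lam₁ * (q.2.2.2.2.1 : ZMod p)) ∧
            (q.1.1 : ZMod p) - lam₁ * (q.1.2.1 : ZMod p) ≠ 0 ∧
            (q.1.2.2.1 : ZMod p) - lam₁ * (q.1.2.2.2.1 : ZMod p) ≠ 0 ∧
            (q.2.1 : ZMod p) - lam₁ * (q.2.2.1 : ZMod p) ≠ 0 ∧
            (q.2.2.2.1 : ZMod p) - lam₁ * (q.2.2.2.2.1 : ZMod p) ≠ 0 ∧
            -- μ = ω₂, in F_{p²}
            (q.1.2.2.2.2 : E) * ((q.1.1 : E) - ω₂ * (q.1.2.1 : E)) *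
                ((q.1.2.2.1 : E) - ω₂ * (q.1.2.2.2.1 : E)) =
              (q.2.2.2.2.2 : E) * ((q.2.1 : E) - ω₂ * (q.2.2.1 : E)) *
                ((q.2.2.2.1 : E) - ω₂ * (q.2.2.2.2.1 : E)) ∧
            (q.1.1 : E) - ω₂ * (q.1.2.1 : E) ≠ 0 ∧
            (q.1.2.2.1 : E) - ω₂ * (q.1.2.2.2.1 : E) ≠ 0 ∧
            (q.2.1 : E) - ω₂ * (q.2.2.1 : E) ≠ 0 ∧
            (q.2.2.2.1 : E) - ω₂ * (q.2.2.2.2.1 : E) ≠ 0 ∧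
            -- μ = ω₃, in F_{p²}
            (q.1.2.2.2.2 : E) * ((q.1.1 : E) - ω₃ * (q.1.2.1 : E)) *
                ((q.1.2.2.1 : E) - ω₃ * (q.1.2.2.2.1 : E)) =
              (q.2.2.2.2.2 : E) * ((q.2.1 : E) - ω₃ * (q.2.2.1 : E)) *
                ((q.2.2.2.1 : E) - ω₃ * (q.2.2.2.2.1 : E)) ∧
            (q.1.1 : E) - ω₃ * (q.1.2.1 : E) ≠ 0 ∧
            (q.1.2.2.1 : E) - ω₃ * (q.1.2.2.2.1 : E) ≠ 0 ∧
            (q.2.1 : E) - ω₃ * (q.2.2.1 : E) ≠ 0 ∧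
            (q.2.2.2.1 : E) - ω₃ * (q.2.2.2.2.1 : E) ≠ 0} : ℝ)
          ≤ Real.exp (c * Real.log p / Real.log (Real.log p)) *
              (p : ℝ) ^ ((3 : ℝ) / (k : ℝ)) *
              (((Finset.Icc a₁ b₁).card : ℝ) * ((Finset.Icc a₂ b₂).card : ℝ)) ^
                (2 - 1 / (k : ℝ)) := by
  obtain ⟨p₀, hp₀⟩ := stmt11_general (k := k) (by exact_mod_cast hk)
  refine ⟨1, one_pos, max p₀ 3, fun p _ hp E _ _ _ _ lam₁ lam₂ lam₃ ω₂ ω₃ hirr hω₂ hω₃ hω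
    a₁ b₁ a₂ b₂ hI hJ hI_ge hI_lt hJ_ge hJ_lt => ?_⟩
  classical
  have := charP_of_injective_algebraMap (algebraMap (ZMod p) E).injective p
  have hp₃ : (3 : ℝ) ≤ p := by exact_mod_cast (by omega : 3 ≤ p)
  have hμ := injective_algebraMap_roots_of_irreducible hirr lam₁ hω₂ hω₃ hω
  have hN : (p : ℝ) ^ (3 / 4 : ℝ) ≤ #(Icc a₁ b₁) * #(Icc a₂ b₂) :=
    rpow_le_mul_of_add_eq (by linarith) (by norm_num) hI_ge hJ_ge
  have hNp := mul_le_of_le_rpow (by linarith) (by norm_num) (by positivity) hI_lt.le hJ_lt.le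
  have hbound := hp₀ p (by omega) E _ hμ a₁ b₁ a₂ b₂ hI hJ hN (by exact_mod_cast hNp)
  refine (Nat.cast_le.2 (natCard_subtype_le_card ?_)).trans (hbound.trans ?_)
  · rintro ⟨⟨x, y, x₀, y₀, s⟩, x', y', x₀', y₀', s'⟩ ⟨hx, hy, hx₀, hy₀, hsK, hx', hy', hx₀', hy₀',
      hsK', hs, hs', heq₁, -, -, -, -, heq₂, -, -, -, -, heq₃, -⟩
    rw [ne_eq, CharP.intCast_eq_zero_iff (ZMod p) p, ← CharP.intCast_eq_zero_iff E p] at hs hs'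
    simp only [mem_collisions, coefficientTuples, mem_filter, mem_product]
    exact ⟨⟨⟨⟨hx, hy, hx₀, hy₀, hsK⟩, hs⟩, ⟨hx', hy', hx₀', hy₀', hsK'⟩, hs'⟩,
      energyProduct_algebraMap_eq heq₁ heq₂ heq₃⟩
  · rw [mul_assoc, one_mul]
    exact le_mul_of_one_le_left (by positivity)
      (one_le_exp_log_div_log_log (Real.exp_one_lt_three.le.trans hp₃))

end MainTheorem
end
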